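/- arXiv:2411.11271 — 6 statements merged into one kernel-verified Lean document; each statement's English description precedes it below -/
import Mathlib

section
/- Let μ̂_n := (1/n)·Σ_{m=1}^n X_m denote the sample mean. Then for every δ ∈ (0,1) and every n ≥ 1, P( ‖μ̂_n − μ‖ ≤ 2·β·v^{1/p}·δ^{−1/p}·n^{−(p−1)/p} ) ≥ 1 − δ. -/
open MeasureTheory

lemma smooth_p {B : Type*} [NormedAddCommGroup B] (β : ℝ) (hβ : 1 ≤ β)
    (hsmooth : ∀ x y : B, ‖x + y‖ ^ 2 + ‖x - y‖ ^ 2 ≤ 2 * ‖x‖ ^ 2 + 2 * β ^ 2 * ‖y‖ ^ 2)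
    (p : ℝ) (hp1 : 1 < p) (hp2 : p ≤ 2) (x y : B) :
    ‖x + y‖ ^ p + ‖x - y‖ ^ p ≤ 2 * ‖x‖ ^ p + 2 * β ^ p * ‖y‖ ^ p := by
  have key : ∀ a : ℝ, 0 ≤ a → (a ^ 2) ^ (p / 2) = a ^ p := by
    intro a ha
    rw [← Real.rpow_natCast, ← Real.rpow_mul ha]
    congr 1
    push_cast
    ring
  have hc : ConcaveOn ℝ (Set.Ici 0) fun x : ℝ => x ^ (p / 2) :=
    Real.concaveOn_rpow (by linarith) (by linarith)
  have h1 := hc.2 (show ‖x + y‖ ^ 2 ∈ Set.Ici (0 : ℝ) from Set.mem_Ici.2 (by positivity))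
    (show ‖x - y‖ ^ 2 ∈ Set.Ici (0 : ℝ) from Set.mem_Ici.2 (by positivity))
    (show (0 : ℝ) ≤ 1 / 2 by norm_num) (show (0 : ℝ) ≤ 1 / 2 by norm_num) (by norm_num)
  simp only [smul_eq_mul] at h1
  rw [key _ (norm_nonneg _), key _ (norm_nonneg _)] at h1
  have h2 : (1 / 2 * ‖x + y‖ ^ 2 + 1 / 2 * ‖x - y‖ ^ 2) ^ (p / 2) ≤
      (‖x‖ ^ 2 + (β * ‖y‖) ^ 2) ^ (p / 2) := by
    apply Real.rpow_le_rpow (by positivity) _ (by linarith)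
    have := hsmooth x y
    nlinarith
  have h3 := Real.rpow_add_le_add_rpow (p := p / 2) (sq_nonneg ‖x‖) (sq_nonneg (β * ‖y‖))
    (by linarith) (by linarith)
  rw [key _ (norm_nonneg _), key _ (by positivity),
    Real.mul_rpow (by positivity) (by positivity)] at h3
  linarith

lemma step {B : Type*} [NormedAddCommGroup B] [NormedSpace ℝ B] [CompleteSpace B]
    {Ω : Type*} {m mΩ : MeasurableSpace Ω} {P : Measure Ω} [IsProbabilityMeasure P]
    (hm : m ≤ mΩ)
    (β : ℝ) (hβ : 1 ≤ β)
    (hsmooth : ∀ x y : B, ‖x + y‖ ^ 2 + ‖x - y‖ ^ 2 ≤ 2 * ‖x‖ ^ 2 + 2 * β ^ 2 * ‖y‖ ^ 2)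
    (p v : ℝ) (hp1 : 1 < p) (hp2 : p ≤ 2) (S Y : Ω → B)
    (hS : StronglyMeasurable[m] S) (hSp : MemLp S (ENNReal.ofReal p) P)
    (hYp : MemLp Y (ENNReal.ofReal p) P)
    (hY : P[Y | m] =ᵐ[P] fun _ => 0)
    (hYv : ∀ᵐ ω ∂P, (P[fun ω' => ‖Y ω'‖ ^ p | m]) ω ≤ v) :
    ∫ ω, ‖S ω + Y ω‖ ^ p ∂P ≤ ∫ ω, ‖S ω‖ ^ p ∂P + 2 * β ^ p * v := by
  have hp0 : ENNReal.ofReal p ≠ 0 := by simp; linarith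
  have hone : 1 ≤ ENNReal.ofReal p := by simp; linarith
  have htr : (ENNReal.ofReal p).toReal = p := ENNReal.toReal_ofReal (by linarith)
  have I : ∀ f : Ω → B, MemLp f (ENNReal.ofReal p) P → Integrable (fun ω => ‖f ω‖ ^ p) P := by
    intro f hf
    have := hf.integrable_norm_rpow hp0 (by simp)
    rwa [htr] at this
  have hv : ∫ ω, ‖Y ω‖ ^ p ∂P ≤ v := by
    rw [← integral_condExp hm]
    calc _ ≤ ∫ _, v ∂P := integral_mono_ae integrable_condExp (integrable_const _) hYv
      _ = v := by simp
  have hce : P[S - Y | m] =ᵐ[P] S := by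
    have h1 := condExp_sub (hSp.integrable hone) (hYp.integrable hone) m
    rw [condExp_of_stronglyMeasurable hm hS (hSp.integrable hone)] at h1
    filter_upwards [h1, hY] with ω h1 h2
    simp [h1, h2]
  have hj := integral_norm_condExp_rpow_le (m := m) (μ := P) hp1.le (f := S - Y)
    (I _ (hSp.sub hYp))
  have he : ∫ ω, ‖(P[S - Y | m]) ω‖ ^ p ∂P = ∫ ω, ‖S ω‖ ^ p ∂P := by
    apply integral_congr_ae
    filter_upwards [hce] with ω h
    rw [h]
  rw [he] at hj
  have hs : ∫ ω, (‖S ω + Y ω‖ ^ p + ‖S ω - Y ω‖ ^ p) ∂P ≤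
      ∫ ω, (2 * ‖S ω‖ ^ p + 2 * β ^ p * ‖Y ω‖ ^ p) ∂P :=
    integral_mono ((I _ (hSp.add hYp)).add (I _ (hSp.sub hYp)))
      (((I _ hSp).const_mul _).add ((I _ hYp).const_mul _))
      (fun ω => smooth_p β hβ hsmooth p hp1 hp2 (S ω) (Y ω))
  have hA := I _ (hSp.add hYp)
  have hD := I _ (hSp.sub hYp)
  simp only [Pi.add_apply, Pi.sub_apply] at hA hD
  rw [integral_add hA hD,
    integral_add ((I _ hSp).const_mul _) ((I _ hYp).const_mul _),
    integral_const_mul, integral_const_mul] at hs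
  have hb : 0 ≤ 2 * β ^ p := by positivity
  have := mul_le_mul_of_nonneg_left hv hb
  simp only [Pi.sub_apply] at hj
  linarith

/-- **Naive mean concentration in smooth Banach spaces.**
If `(Xₙ)ₙ≥1` are `𝔹`-valued random variables adapted to a filtration `ℱ`, with conditional
mean `μ` and conditional centered `p`-th moment bounded by `v` (`p ∈ (1,2]`, `v > 0`), and
the norm of the separable Banach space `𝔹` is `(2,β)`-smooth, then for every `δ ∈ (0,1)`
and `n ≥ 1` the sample mean `μ̂ₙ = n⁻¹ ∑_{m=1}^n Xₘ` satisfies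
`P(‖μ̂ₙ - μ‖ ≤ 2βv^{1/p} δ^{-1/p} n^{-(p-1)/p}) ≥ 1 - δ`. -/
theorem stmt0
    {B : Type*} [NormedAddCommGroup B] [NormedSpace ℝ B] [CompleteSpace B]
    [TopologicalSpace.SeparableSpace B]
    {Ω : Type*} {mΩ : MeasurableSpace Ω} {P : Measure Ω} [IsProbabilityMeasure P]
    (β : ℝ) (hβ : 1 ≤ β)
    (hsmooth : ∀ x y : B, ‖x + y‖ ^ 2 + ‖x - y‖ ^ 2 ≤ 2 * ‖x‖ ^ 2 + 2 * β ^ 2 * ‖y‖ ^ 2)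
    (ℱ : Filtration ℕ mΩ) (X : ℕ → Ω → B) (μ : B) (p v : ℝ)
    (hp1 : 1 < p) (hp2 : p ≤ 2) (hv : 0 < v)
    (hadapted : ∀ n : ℕ, 1 ≤ n → StronglyMeasurable[ℱ n] (X n))
    (hint : ∀ n : ℕ, 1 ≤ n → Integrable (X n) P)
    (hmom : ∀ n : ℕ, 1 ≤ n → Integrable (fun ω => ‖X n ω‖ ^ p) P)
    (hcondmean : ∀ n : ℕ, P[X (n + 1) | ℱ n] =ᵐ[P] fun _ => μ)
    (hcondmom : ∀ n : ℕ, ∀ᵐ ω ∂P, (P[fun ω' => ‖X (n + 1) ω' - μ‖ ^ p | ℱ n]) ω ≤ v)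
    (δ : ℝ) (hδ : δ ∈ Set.Ioo (0 : ℝ) 1) (n : ℕ) (hn : 1 ≤ n) :
    ENNReal.ofReal (1 - δ) ≤
      P {ω | ‖(n : ℝ)⁻¹ • (∑ m ∈ Finset.range n, X (m + 1) ω) - μ‖ ≤
          2 * β * v ^ (1 / p) / (δ ^ (1 / p) * (n : ℝ) ^ ((p - 1) / p))} := by
  have hp0 : ENNReal.ofReal p ≠ 0 := by simp; linarith
  have htr : (ENNReal.ofReal p).toReal = p := ENNReal.toReal_ofReal (by linarith)
  have hppos : 0 < p := by linarith
  have hYp : ∀ k : ℕ, MemLp (fun ω => X (k + 1) ω - μ) (ENNReal.ofReal p) P := by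
    intro k
    have h1 : MemLp (X (k + 1)) (ENNReal.ofReal p) P := by
      rw [← integrable_norm_rpow_iff (hint _ (by omega)).aestronglyMeasurable hp0 (by simp), htr]
      exact hmom _ (by omega)
    exact h1.sub (memLp_const μ)
  have hY0 : ∀ k : ℕ, P[fun ω => X (k + 1) ω - μ | ℱ k] =ᵐ[P] fun _ => 0 := by
    intro k
    have h1 := condExp_sub (hint (k + 1) (by omega)) (integrable_const (μ := P) μ) (ℱ k)
    rw [condExp_const (ℱ.le k)] at h1
    filter_upwards [h1, hcondmean k] with ω h1 h2
    refine Eq.trans h1 ?_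
    simp [h2]
  have hmain : ∀ k : ℕ,
      StronglyMeasurable[ℱ k] (fun ω => ∑ m ∈ Finset.range k, (X (m + 1) ω - μ)) ∧
      MemLp (fun ω => ∑ m ∈ Finset.range k, (X (m + 1) ω - μ)) (ENNReal.ofReal p) P ∧
      ∫ ω, ‖∑ m ∈ Finset.range k, (X (m + 1) ω - μ)‖ ^ p ∂P ≤ k * (2 * β ^ p * v) := by
    intro k
    induction k with
    | zero =>
      refine ⟨by simpa using stronglyMeasurable_const, by simp, ?_⟩
      simp [Real.zero_rpow hppos.ne']
    | succ k ih =>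
      obtain ⟨h1, h2, h3⟩ := ih
      simp only [Finset.sum_range_succ]
      refine ⟨(h1.mono (ℱ.mono (Nat.le_succ k))).add
        ((hadapted (k + 1) (by omega)).sub stronglyMeasurable_const), h2.add (hYp k), ?_⟩
      have := step (ℱ.le k) β hβ hsmooth p v hp1 hp2 _ _ h1 h2 (hYp k) (hY0 k) (hcondmom k)
      push_cast
      linarith
  obtain ⟨-, hm2, hm3⟩ := hmain n
  obtain ⟨hδ0, hδ1⟩ := hδ
  have hn0 : (0 : ℝ) < n := by exact_mod_cast hn
  have hβ0 : 0 < β := by linarith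
  set S : Ω → B := fun ω => ∑ m ∈ Finset.range n, (X (m + 1) ω - μ) with hSdef
  set t : ℝ := 2 * β * v ^ (1 / p) / (δ ^ (1 / p) * (n : ℝ) ^ ((p - 1) / p)) with ht
  have htpos : 0 < t := by positivity
  have hint' : Integrable (fun ω => ‖S ω‖ ^ p) P := by
    have := hm2.integrable_norm_rpow hp0 (by simp)
    rwa [htr] at this
  have hroot : ∀ a : ℝ, 0 ≤ a → (a ^ (1 / p)) ^ p = a := by
    intro a ha
    rw [← Real.rpow_mul ha, one_div_mul_cancel hppos.ne', Real.rpow_one]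
  have hpow : (n * t) ^ p * δ = 2 ^ p * β ^ p * v * n := by
    have e1 : ((n : ℝ) ^ ((p - 1) / p)) ^ p = (n : ℝ) ^ p / n := by
      rw [← Real.rpow_mul hn0.le, div_mul_cancel₀ _ hppos.ne', Real.rpow_sub hn0, Real.rpow_one]
    have hnp : (n : ℝ) ^ p ≠ 0 := by positivity
    rw [ht, Real.mul_rpow (by positivity) (by positivity),
      Real.div_rpow (by positivity) (by positivity),
      Real.mul_rpow (by positivity) (by positivity),
      Real.mul_rpow (by positivity) (by positivity),
      Real.mul_rpow (by positivity) (by positivity), hroot v hv.le, hroot δ hδ0.le, e1]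
    field_simp
  have hmarkov := mul_meas_ge_le_integral_of_nonneg (μ := P)
    (ae_of_all _ fun ω => (by positivity : (0 : ℝ) ≤ ‖S ω‖ ^ p)) hint' ((n * t) ^ p)
  have h2p : (2 : ℝ) ≤ 2 ^ p := by
    simpa using Real.rpow_le_rpow_of_exponent_le (x := 2) (by norm_num) hp1.le
  have hbad : P.real {ω | (n * t) ^ p ≤ ‖S ω‖ ^ p} ≤ δ := by
    have h0 : 0 < (n * t) ^ p := by positivity
    refine le_of_mul_le_mul_left ?_ h0
    rw [hpow]
    refine (hmarkov.trans hm3).trans ?_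
    have : 0 ≤ β ^ p * v * n := by positivity
    nlinarith
  have hbad' : P {ω | (n * t) ^ p ≤ ‖S ω‖ ^ p} ≤ ENNReal.ofReal δ :=
    (ENNReal.le_ofReal_iff_toReal_le (measure_ne_top _ _) hδ0.le).2 hbad
  rw [ENNReal.ofReal_sub _ hδ0.le, ENNReal.ofReal_one, tsub_le_iff_right]
  calc (1 : ENNReal) = P Set.univ := measure_univ.symm
    _ ≤ P ({ω | ‖(n : ℝ)⁻¹ • (∑ m ∈ Finset.range n, X (m + 1) ω) - μ‖ ≤ t} ∪
          {ω | (n * t) ^ p ≤ ‖S ω‖ ^ p}) := by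
        apply measure_mono
        intro ω _
        rcases le_or_gt ‖(n : ℝ)⁻¹ • (∑ m ∈ Finset.range n, X (m + 1) ω) - μ‖ t with h | h
        · exact Or.inl h
        · refine Or.inr ?_
          have hS : S ω = (n : ℝ) • ((n : ℝ)⁻¹ • (∑ m ∈ Finset.range n, X (m + 1) ω) - μ) := by
            rw [smul_sub, smul_inv_smul₀ hn0.ne', hSdef]
            simp [Finset.sum_sub_distrib, Nat.cast_smul_eq_nsmul]
          change (n * t) ^ p ≤ ‖S ω‖ ^ p
          apply Real.rpow_le_rpow (by positivity) _ hppos.le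
          rw [hS, norm_smul, Real.norm_of_nonneg hn0.le]
          exact mul_le_mul_of_nonneg_left h.le hn0.le
    _ ≤ _ := (measure_union_le _ _).trans (by gcongr)
end

section
/- Let (X_m)_{m≥1} be Bochner-integrable 𝔹-valued random variables adapted to a filtration (F_m)_{m≥0} with E[X_m | F_{m−1}] = 0 almost surely and E‖X_m‖^p < ∞ for all m, where p ∈ (1,2]. Then for every n ≥ 1, E‖X_1 + ⋯ + X_n‖^p ≤ 2^p·β^p·Σ_{m=1}^n E‖X_m‖^p. -/
open MeasureTheory

lemma smooth_rpow_aux {B : Type*} [NormedAddCommGroup B] (β : ℝ) (hβ : 1 ≤ β)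
    (hsmooth : ∀ x y : B, ‖x + y‖ ^ 2 + ‖x - y‖ ^ 2 ≤ 2 * ‖x‖ ^ 2 + 2 * β ^ 2 * ‖y‖ ^ 2)
    (p : ℝ) (hp1 : 1 < p) (hp2 : p ≤ 2) (x y : B) :
    ‖x + y‖ ^ p + ‖x - y‖ ^ p ≤ 2 * ‖x‖ ^ p + 2 * (β ^ p * ‖y‖ ^ p) := by
  have key : ∀ a : ℝ, 0 ≤ a → (a ^ 2) ^ (p / 2) = a ^ p := by
    intro a ha
    rw [← Real.rpow_natCast, ← Real.rpow_mul ha]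
    congr 1
    push_cast
    ring
  have hc := Real.concaveOn_rpow (p := p / 2) (by linarith) (by linarith)
  have h1 := hc.2 (Set.mem_Ici.2 (sq_nonneg ‖x + y‖)) (Set.mem_Ici.2 (sq_nonneg ‖x - y‖))
    (show (0 : ℝ) ≤ 1 / 2 by norm_num) (show (0 : ℝ) ≤ 1 / 2 by norm_num) (by norm_num)
  simp only [smul_eq_mul] at h1
  rw [key _ (norm_nonneg _), key _ (norm_nonneg _)] at h1
  have h2 : (1 / 2 * ‖x + y‖ ^ 2 + 1 / 2 * ‖x - y‖ ^ 2) ^ (p / 2)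
      ≤ (‖x‖ ^ 2 + (β * ‖y‖) ^ 2) ^ (p / 2) := by
    apply Real.rpow_le_rpow (by positivity) _ (by linarith)
    have := hsmooth x y
    rw [mul_pow]
    linarith
  have h3 := Real.rpow_add_le_add_rpow (p := p / 2) (a := ‖x‖ ^ 2) (b := (β * ‖y‖) ^ 2)
    (by positivity) (by positivity) (by linarith) (by linarith)
  rw [key _ (norm_nonneg _), key _ (by positivity),
    Real.mul_rpow (by linarith) (norm_nonneg _)] at h3
  linarith

/-- **Marcinkiewicz–Zygmund / von Bahr–Esseen inequality in smooth Banach spaces,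
martingale-difference case.** If `(Xₘ)ₘ≥1` are `𝔹`-valued random variables adapted to a
filtration `ℱ` with `E[Xₘ | F_{m-1}] = 0` a.s. and `E‖Xₘ‖^p < ∞` for `p ∈ (1,2]`, in a
separable Banach space whose norm is `(2,β)`-smooth, then for every `n ≥ 1`,
`E‖X₁ + ⋯ + Xₙ‖^p ≤ 2^p β^p ∑_{m=1}^n E‖Xₘ‖^p`. -/
theorem stmt2
    {B : Type*} [NormedAddCommGroup B] [NormedSpace ℝ B] [CompleteSpace B]
    [TopologicalSpace.SeparableSpace B]
    {Ω : Type*} {mΩ : MeasurableSpace Ω} {P : Measure Ω} [IsProbabilityMeasure P]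
    (β : ℝ) (hβ : 1 ≤ β)
    (hsmooth : ∀ x y : B, ‖x + y‖ ^ 2 + ‖x - y‖ ^ 2 ≤ 2 * ‖x‖ ^ 2 + 2 * β ^ 2 * ‖y‖ ^ 2)
    (ℱ : Filtration ℕ mΩ) (X : ℕ → Ω → B) (p : ℝ) (hp1 : 1 < p) (hp2 : p ≤ 2)
    (hadapted : ∀ n : ℕ, 1 ≤ n → StronglyMeasurable[ℱ n] (X n))
    (hint : ∀ n : ℕ, 1 ≤ n → Integrable (X n) P)
    (hmom : ∀ n : ℕ, 1 ≤ n → Integrable (fun ω => ‖X n ω‖ ^ p) P)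
    (hcondmean : ∀ n : ℕ, P[X (n + 1) | ℱ n] =ᵐ[P] fun _ => (0 : B))
    (n : ℕ) (hn : 1 ≤ n) :
    ∫ ω, ‖∑ m ∈ Finset.range n, X (m + 1) ω‖ ^ p ∂P ≤
      2 ^ p * β ^ p * ∑ m ∈ Finset.range n, ∫ ω, ‖X (m + 1) ω‖ ^ p ∂P := by
  have hp0 : 0 < p := by linarith
  have hpE : ENNReal.ofReal p ≠ 0 := by simpa using hp0
  have hiff : ∀ f : Ω → B, AEStronglyMeasurable f P →
      (Integrable (fun ω => ‖f ω‖ ^ p) P ↔ MemLp f (ENNReal.ofReal p) P) := by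
    intro f hf
    have := integrable_norm_rpow_iff (p := ENNReal.ofReal p) hf hpE (by simp)
    rwa [ENNReal.toReal_ofReal hp0.le] at this
  have hX : ∀ m, MemLp (X (m + 1)) (ENNReal.ofReal p) P := fun m =>
    (hiff _ (hint (m + 1) (by omega)).1).1 (hmom (m + 1) (by omega))
  have hS : ∀ n, MemLp (fun ω => ∑ m ∈ Finset.range n, X (m + 1) ω) (ENNReal.ofReal p) P :=
    fun n => memLp_finsetSum _ fun m _ => hX m
  have hSi : ∀ n, Integrable (fun ω => ∑ m ∈ Finset.range n, X (m + 1) ω) P :=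
    fun n => integrable_finsetSum _ fun m _ => hint (m + 1) (by omega)
  have hSm : ∀ n, StronglyMeasurable[ℱ n] (fun ω => ∑ m ∈ Finset.range n, X (m + 1) ω) := by
    intro n
    refine Finset.stronglyMeasurable_fun_sum _ fun m hm => ?_
    exact (hadapted (m + 1) (by omega)).mono (ℱ.mono (by have := Finset.mem_range.1 hm; omega))
  have hcvx : ConvexOn ℝ Set.univ (fun x : B => ‖x‖ ^ p) := by
    have h1 : ConvexOn ℝ Set.univ (fun x : B => ‖x‖) := convexOn_univ_norm
    refine ⟨convex_univ, fun x _ y _ a b ha hb hab => ?_⟩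
    have h2 := (convexOn_rpow hp1.le).2 (Set.mem_Ici.2 (norm_nonneg x))
      (Set.mem_Ici.2 (norm_nonneg y)) ha hb hab
    exact (Real.rpow_le_rpow (norm_nonneg _)
      (h1.2 (Set.mem_univ x) (Set.mem_univ y) ha hb hab) hp0.le).trans h2
  have hcont : Continuous (fun x : B => ‖x‖ ^ p) :=
    continuous_norm.rpow_const fun _ => Or.inr hp0.le
  have h2p : (2 : ℝ) ≤ 2 ^ p := by
    simpa using Real.rpow_le_rpow_of_exponent_le (x := 2) (by norm_num) hp1.le
  have hβp : 0 ≤ β ^ p := Real.rpow_nonneg (by linarith) _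
  clear hn
  induction n with
  | zero => simp [Real.zero_rpow hp0.ne']
  | succ n ih =>
    set S : Ω → B := fun ω => ∑ m ∈ Finset.range n, X (m + 1) ω with hSdef
    have hplus := (hiff _ ((hS n).add (hX n)).1).2 ((hS n).add (hX n))
    have hminus := (hiff _ ((hS n).sub (hX n)).1).2 ((hS n).sub (hX n))
    have hS0 := (hiff _ (hS n).1).2 (hS n)
    have hX0 := hmom (n + 1) (by omega)
    have hce : P[S - X (n + 1) | ℱ n] =ᵐ[P] S := by
      have h1 := condExp_sub (hSi n) (hint (n + 1) (by omega)) (ℱ n)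
      have h2 := condExp_of_stronglyMeasurable (ℱ.le n) (hSm n) (hSi n)
      filter_upwards [h1, hcondmean n] with ω h1 h3
      rw [h1, Pi.sub_apply, h3, h2, sub_zero]
    have hj := hcvx.map_condExp_le_univ (ℱ.le n) hcont.lowerSemicontinuous
      ((hSi n).sub (hint (n + 1) (by omega))) hminus
    have hJ : ∫ ω, ‖S ω‖ ^ p ∂P ≤ ∫ ω, ‖(S - X (n + 1)) ω‖ ^ p ∂P := by
      have h4 := integral_condExp (μ := P) (f := (fun x : B => ‖x‖ ^ p) ∘ (S - X (n + 1))) (ℱ.le n)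
      refine le_trans (integral_mono_ae hS0 integrable_condExp ?_) h4.le
      filter_upwards [hce, hj] with ω h5 h6
      have h7 : ‖(P[S - X (n + 1) | ℱ n]) ω‖ ^ p ≤ _ := h6
      rw [h5] at h7
      exact h7
    have hsum : ∫ ω, ‖(S + X (n + 1)) ω‖ ^ p ∂P + ∫ ω, ‖(S - X (n + 1)) ω‖ ^ p ∂P ≤
        2 * ∫ ω, ‖S ω‖ ^ p ∂P + 2 * (β ^ p * ∫ ω, ‖X (n + 1) ω‖ ^ p ∂P) := by
      rw [← integral_add hplus hminus, ← integral_const_mul, ← integral_const_mul,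
        ← integral_const_mul, ← integral_add (hS0.const_mul _) ((hX0.const_mul _).const_mul _)]
      exact integral_mono (hplus.add hminus)
        ((hS0.const_mul _).add ((hX0.const_mul _).const_mul _))
        fun ω => smooth_rpow_aux β hβ hsmooth p hp1 hp2 (S ω) (X (n + 1) ω)
    have hXn : 0 ≤ β ^ p * ∫ ω, ‖X (n + 1) ω‖ ^ p ∂P :=
      mul_nonneg hβp (integral_nonneg fun ω => Real.rpow_nonneg (norm_nonneg _) _)
    have h8 := mul_le_mul_of_nonneg_right h2p hXn
    have h9 : ∫ ω, ‖∑ m ∈ Finset.range (n + 1), X (m + 1) ω‖ ^ p ∂P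
        = ∫ ω, ‖(S + X (n + 1)) ω‖ ^ p ∂P := by
      simp only [Finset.sum_range_succ, hSdef, Pi.add_apply]
    rw [h9, Finset.sum_range_succ, mul_add]
    have h10 : ∫ ω, ‖S ω‖ ^ p ∂P ≤ _ := ih
    linarith
end

section
/- For every real k > 0 and every real t > 0, it holds that 1 − min(1, t)/t ≤ (t^k/(k+1))·(k/(k+1))^k. -/
/-- For every real `k > 0` and every real `t > 0`,
`1 - min 1 t / t ≤ (t ^ k / (k + 1)) * (k / (k + 1)) ^ k`,
where the powers are real (rpow) powers. -/
theorem stmt3 (k t : ℝ) (hk : 0 < k) (ht : 0 < t) :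
    1 - min 1 t / t ≤ (t ^ k / (k + 1)) * (k / (k + 1)) ^ k := by
  rcases le_total t 1 with h | h
  · rw [min_eq_right h, div_self ht.ne', sub_self]
    positivity
  · rw [min_eq_left h]
    have hs : 0 < t * (k / (k + 1)) := by positivity
    have hb := one_add_mul_self_le_rpow_one_add (s := t * (k / (k + 1)) - 1) (by linarith)
      (p := k + 1) (by linarith)
    rw [add_sub_cancel, Real.rpow_add hs, Real.rpow_one, Real.mul_rpow ht.le (by positivity)] at hb
    generalize t ^ k = a at *
    generalize (k / (k + 1)) ^ k = b at *
    have e1 : 1 + (k + 1) * (t * (k / (k + 1)) - 1) = k * t * (1 - 1 / t) := by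
      field_simp
      ring
    have e2 : a * b * (t * (k / (k + 1))) = k * t * (a / (k + 1) * b) := by
      field_simp
    rw [e1, e2] at hb
    exact le_of_mul_le_mul_left hb (by positivity)
end

section
/- Let 𝒢 be a sub-σ-algebra of F, let X be a Bochner-integrable 𝔹-valued random variable with E‖X‖^p < ∞, E[X | 𝒢] = μ almost surely for a fixed μ ∈ 𝔹, and E[‖X − μ‖^p | 𝒢] ≤ v almost surely, where p ∈ (1,2] and v > 0. Let Z be a 𝒢-measurable 𝔹-valued random variable and let λ > 0. Then almost surely ‖μ − (E[Trunc(λ(X − Z))·(X − Z) | 𝒢] + Z)‖ ≤ K_p·2^{p−1}·λ^{p−1}·(v + ‖Z − μ‖^p). -/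
open MeasureTheory
open scoped Classical

/-- `truncB x = min(1, ‖x‖)/‖x‖` for `x ≠ 0`, and `truncB 0 = 1`; so `Trunc x • x` is the
projection of `x` onto the closed unit ball. -/
noncomputable def truncB {B : Type*} [NormedAddCommGroup B] (x : B) : ℝ :=
  if x = 0 then 1 else min 1 ‖x‖ / ‖x‖

/-- `K_p = (1/p) ((p-1)/p)^{p-1}`. -/
noncomputable def Kp (p : ℝ) : ℝ := (1 / p) * ((p - 1) / p) ^ (p - 1)

lemma truncB_eq {B : Type*} [NormedAddCommGroup B] (x : B) : truncB x = (max 1 ‖x‖)⁻¹ := by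
  unfold truncB
  split_ifs with h
  · simp [h]
  · have hx : 0 < ‖x‖ := norm_pos_iff.2 h
    rcases le_total 1 ‖x‖ with h1 | h1
    · rw [min_eq_left h1, max_eq_right h1, one_div]
    · rw [min_eq_right h1, max_eq_left h1, div_self hx.ne', inv_one]

lemma Kp_bern (p : ℝ) (hp1 : 1 < p) (t : ℝ) (ht : 0 ≤ t) : t - 1 ≤ Kp p * t ^ p := by
  have hc : 0 < (p - 1) / p := div_pos (by linarith) (by linarith)
  have hu : 0 ≤ t * ((p - 1) / p) := by positivity
  have h := one_add_mul_self_le_rpow_one_add (s := t * ((p - 1) / p) - 1) (by linarith) hp1.le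
  rw [add_sub_cancel, Real.mul_rpow ht hc.le] at h
  have h2 : ((p - 1) / p) ^ p = ((p - 1) / p) ^ (p - 1) * ((p - 1) / p) := by
    rw [← Real.rpow_add_one hc.ne']; ring_nf
  rw [h2] at h
  have hp : p ≠ 0 := by linarith
  have e1 : 1 + p * (t * ((p - 1) / p) - 1) = (p - 1) * (t - 1) := by field_simp; ring
  have e2 : t ^ p * (((p - 1) / p) ^ (p - 1) * ((p - 1) / p)) = (p - 1) * (Kp p * t ^ p) := by
    unfold Kp; ring
  rw [e1, e2] at h
  exact le_of_mul_le_mul_left h (by linarith)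

lemma Kp_nonneg (p : ℝ) (hp1 : 1 < p) : 0 ≤ Kp p := by
  have h : 0 ≤ p - 1 := by linarith
  have h' : 0 ≤ p := by linarith
  unfold Kp
  positivity

lemma trunc_err {B : Type*} [NormedAddCommGroup B] [NormedSpace ℝ B] (p : ℝ) (hp1 : 1 < p)
    (lam : ℝ) (hlam : 0 < lam) (y : B) :
    ‖y - truncB (lam • y) • y‖ ≤ Kp p * lam ^ (p - 1) * ‖y‖ ^ p := by
  have hK := Kp_nonneg p hp1
  rw [truncB_eq, norm_smul, Real.norm_of_nonneg hlam.le]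
  rcases le_total (lam * ‖y‖) 1 with h1 | h1
  · rw [max_eq_left h1, inv_one, one_smul, sub_self, norm_zero]
    positivity
  · rw [max_eq_right h1]
    have hy : 0 < ‖y‖ := by
      by_contra hy
      have : ‖y‖ = 0 := le_antisymm (not_lt.1 hy) (norm_nonneg y)
      rw [this] at h1
      linarith
    have e : y - (lam * ‖y‖)⁻¹ • y = (1 - (lam * ‖y‖)⁻¹) • y := by rw [sub_smul, one_smul]
    rw [e, norm_smul, Real.norm_of_nonneg (sub_nonneg.2 (inv_le_one_of_one_le₀ h1))]
    have hb := Kp_bern p hp1 (lam * ‖y‖) (by positivity)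
    rw [Real.mul_rpow hlam.le hy.le] at hb
    have e3 : lam ^ p = lam ^ (p - 1) * lam := by
      rw [← Real.rpow_add_one hlam.ne']; ring_nf
    rw [e3] at hb
    refine le_of_mul_le_mul_left ?_ hlam
    calc lam * ((1 - (lam * ‖y‖)⁻¹) * ‖y‖) = lam * ‖y‖ - 1 := by field_simp
      _ ≤ _ := hb
      _ = _ := by ring

lemma two_rpow {B : Type*} [NormedAddCommGroup B] (p : ℝ) (hp1 : 1 < p) (x y : B) :
    ‖x - y‖ ^ p ≤ 2 ^ (p - 1) * (‖x‖ ^ p + ‖y‖ ^ p) := by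
  refine (Real.rpow_le_rpow (norm_nonneg _) (norm_sub_le x y) (by linarith)).trans ?_
  have h := NNReal.rpow_add_le_mul_rpow_add_rpow ‖x‖₊ ‖y‖₊ hp1.le
  exact_mod_cast h

/-- **Truncation error bound.** If `E[X | 𝒢] = μ` a.s. and `E[‖X - μ‖^p | 𝒢] ≤ v` a.s. for
`p ∈ (1,2]`, `v > 0`, `Z` is `𝒢`-measurable and `λ > 0`, then almost surely
`‖μ - (E[Trunc(λ(X-Z))·(X-Z) | 𝒢] + Z)‖ ≤ K_p 2^{p-1} λ^{p-1} (v + ‖Z - μ‖^p)`. -/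
theorem stmt4
    {B : Type*} [NormedAddCommGroup B] [NormedSpace ℝ B] [CompleteSpace B]
    [TopologicalSpace.SeparableSpace B]
    {Ω : Type*} {mΩ : MeasurableSpace Ω} {P : Measure Ω} [IsProbabilityMeasure P]
    (𝒢 : MeasurableSpace Ω) (h𝒢 : 𝒢 ≤ mΩ)
    (X : Ω → B) (μ : B) (p v : ℝ) (hp1 : 1 < p) (hp2 : p ≤ 2) (hv : 0 < v)
    (hint : Integrable X P)
    (hmom : Integrable (fun ω => ‖X ω‖ ^ p) P)
    (hcondmean : P[X | 𝒢] =ᵐ[P] fun _ => μ)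
    (hcondmom : ∀ᵐ ω ∂P, (P[fun ω' => ‖X ω' - μ‖ ^ p | 𝒢]) ω ≤ v)
    (Z : Ω → B) (hZ : StronglyMeasurable[𝒢] Z)
    (lam : ℝ) (hlam : 0 < lam) :
    ∀ᵐ ω ∂P,
      ‖μ - ((P[fun ω' => truncB (lam • (X ω' - Z ω')) • (X ω' - Z ω') | 𝒢]) ω + Z ω)‖ ≤
        Kp p * 2 ^ (p - 1) * lam ^ (p - 1) * (v + ‖Z ω - μ‖ ^ p) := by
  have hZ' : StronglyMeasurable[mΩ] Z := hZ.mono h𝒢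
  have hK := Kp_nonneg p hp1
  set T : Ω → B := fun ω' => truncB (lam • (X ω' - Z ω')) • (X ω' - Z ω') with hT
  set C : ℝ := Kp p * 2 ^ (p - 1) * lam ^ (p - 1) with hC
  have hC0 : 0 ≤ C := by positivity
  have hTint : Integrable T P := by
    refine Integrable.of_bound (C := 1 / lam) ?_ ?_
    · have hc : Continuous (fun y : B => truncB (lam • y) • y) := by
        simp_rw [truncB_eq]
        refine Continuous.smul (Continuous.inv₀ (by fun_prop) ?_) continuous_id
        intro y
        positivity
      exact hc.comp_aestronglyMeasurable
        (hint.aestronglyMeasurable.sub hZ'.aestronglyMeasurable)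
    · refine Filter.Eventually.of_forall fun ω => ?_
      simp only [hT]
      rw [truncB_eq, norm_smul, norm_smul, Real.norm_of_nonneg hlam.le,
        Real.norm_of_nonneg (by positivity), inv_mul_eq_div,
        div_le_div_iff₀ (by positivity) hlam, one_mul, mul_comm]
      exact le_max_right _ _
  have hMint : Integrable (fun ω' => ‖X ω' - μ‖ ^ p) P := by
    refine Integrable.mono' (g := fun ω => 2 ^ (p - 1) * (‖X ω‖ ^ p + ‖μ‖ ^ p))
      ((hmom.add (integrable_const _)).const_mul _) ?_ ?_
    · have hc : Continuous (fun y : B => ‖y - μ‖ ^ p) :=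
        Continuous.rpow_const (by fun_prop) (fun _ => Or.inr (by linarith))
      exact hc.comp_aestronglyMeasurable hint.aestronglyMeasurable
    · refine Filter.Eventually.of_forall fun ω => ?_
      rw [Real.norm_of_nonneg (by positivity)]
      exact two_rpow p hp1 _ _
  have h1 : P[X - T | 𝒢] =ᵐ[P] P[X | 𝒢] - P[T | 𝒢] := condExp_sub hint hTint 𝒢
  have key : ∀ n : ℕ, ∀ᵐ ω ∂P, ‖Z ω‖ ≤ n → ‖μ - ((P[T | 𝒢]) ω + Z ω)‖ ≤
      C * (v + ‖Z ω - μ‖ ^ p) := by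
    intro n
    set A : Set Ω := {ω | ‖Z ω‖ ≤ n} with hA
    have hAm : MeasurableSet[𝒢] A :=
      StronglyMeasurable.measurableSet_le hZ.norm stronglyMeasurable_const
    have hAm' : MeasurableSet[mΩ] A := h𝒢 _ hAm
    have hZA : StronglyMeasurable[𝒢] (A.indicator Z) := hZ.indicator hAm
    have hZAint : Integrable (A.indicator Z) P := by
      refine Integrable.of_bound (C := n) (hZA.mono h𝒢).aestronglyMeasurable ?_
      refine Filter.Eventually.of_forall fun ω => ?_
      by_cases hω : ω ∈ A
      · rw [Set.indicator_of_mem hω]; exact hω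
      · rw [Set.indicator_of_notMem hω]; simp
    set W : Ω → ℝ := A.indicator (fun ω => ‖Z ω - μ‖ ^ p) with hW
    have hWm : StronglyMeasurable[𝒢] W := by
      have hc : Continuous (fun y : B => ‖y - μ‖ ^ p) :=
        Continuous.rpow_const (by fun_prop) (fun _ => Or.inr (by linarith))
      exact (hc.comp_stronglyMeasurable hZ).indicator hAm
    have hWint : Integrable W P := by
      refine Integrable.of_bound (C := ((n : ℝ) + ‖μ‖) ^ p) (hWm.mono h𝒢).aestronglyMeasurable ?_
      refine Filter.Eventually.of_forall fun ω => ?_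
      by_cases hω : ω ∈ A
      · rw [hW, Set.indicator_of_mem hω, Real.norm_of_nonneg (by positivity)]
        refine Real.rpow_le_rpow (norm_nonneg _) ((norm_sub_le _ _).trans ?_) (by linarith)
        have : ‖Z ω‖ ≤ n := hω
        linarith
      · rw [hW, Set.indicator_of_notMem hω, norm_zero]
        positivity
    have hXT : Integrable (X - T) P := hint.sub hTint
    have hXTA : Integrable (A.indicator (X - T)) P := hXT.indicator hAm'
    have h2 := condExp_indicator hXT hAm
    have h3 := condExp_of_stronglyMeasurable h𝒢 hZA hZAint
    have h4 := condExp_sub hXTA hZAint 𝒢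
    have h5 := norm_condExp_le (μ := P) (m := 𝒢) (A.indicator (X - T) - A.indicator Z)
    have hbd : (fun ω => ‖(A.indicator (X - T) - A.indicator Z) ω‖) ≤ᵐ[P]
        C • ((fun ω' => ‖X ω' - μ‖ ^ p) + W) := by
      refine Filter.Eventually.of_forall fun ω => ?_
      by_cases hω : ω ∈ A
      · simp only [Pi.sub_apply, Pi.smul_apply, Pi.add_apply, hW, Set.indicator_of_mem hω,
          smul_eq_mul]
        have e : X ω - T ω - Z ω = (X ω - Z ω) - truncB (lam • (X ω - Z ω)) • (X ω - Z ω) := by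
          simp only [hT]; abel
        rw [e]
        refine (trunc_err p hp1 lam hlam _).trans ?_
        have h := two_rpow p hp1 (X ω - μ) (Z ω - μ)
        rw [sub_sub_sub_cancel_right] at h
        calc Kp p * lam ^ (p - 1) * ‖X ω - Z ω‖ ^ p
            ≤ Kp p * lam ^ (p - 1) * (2 ^ (p - 1) * (‖X ω - μ‖ ^ p + ‖Z ω - μ‖ ^ p)) := by
              gcongr
          _ = _ := by rw [hC]; ring
      · simp only [Pi.sub_apply, Pi.smul_apply, Pi.add_apply, hW, Set.indicator_of_notMem hω,
          smul_eq_mul, sub_zero, norm_zero]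
        positivity
    have h6 := condExp_mono (m := 𝒢) (hXTA.sub hZAint).norm ((hMint.add hWint).smul C) hbd
    have h7 := condExp_smul (μ := P) C ((fun ω' => ‖X ω' - μ‖ ^ p) + W) 𝒢
    have h8 := condExp_add hMint hWint 𝒢
    have h9 := condExp_of_stronglyMeasurable h𝒢 hWm hWint
    filter_upwards [h1, h2, h4, h5, h6, h7, h8, hcondmean, hcondmom] with
      ω h1 h2 h4 h5 h6 h7 h8 hmean hmo hω
    have hωA : ω ∈ A := hω
    rw [h3, Pi.sub_apply, h2, Set.indicator_of_mem hωA, Set.indicator_of_mem hωA, h1,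
      Pi.sub_apply, hmean] at h4
    rw [h4] at h5
    rw [Pi.smul_apply, h8, Pi.add_apply, h9, hW, Set.indicator_of_mem hωA, smul_eq_mul] at h7
    rw [← sub_sub]
    refine h5.trans (h6.trans ?_)
    rw [h7]
    gcongr
  filter_upwards [ae_all_iff.2 key] with ω hω
  obtain ⟨n, hn⟩ := exists_nat_ge ‖Z ω‖
  exact hω n hn
end

section
/- For every ρ > 0, there exists a nonnegative supermartingale (N_n)_{n≥0} with respect to (F_n)_{n≥0} with N_0 = 1 such that for every n ≥ 0, almost surely (1/2)·exp( ρ·‖ξ̂_n − (Σ_{m=1}^n λ_m)·μ‖ − (ρ²·β²·𝔠_p(ρ) + ρ·K_p·2^{p−1})·G_n ) ≤ N_n. -/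
open MeasureTheory
open scoped Classical

/-- `𝔠_p(ρ) = 2^{p+1} (e^{2ρ} - 2ρ - 1)/(2ρ)²`. -/
noncomputable def frakC (p ρ : ℝ) : ℝ :=
  2 ^ (p + 1) * (Real.exp (2 * ρ) - 2 * ρ - 1) / (2 * ρ) ^ 2

lemma smooth_upper {B : Type*} [NormedAddCommGroup B] [NormedSpace ℝ B] (β : ℝ)
    (hsmooth : ∀ x y : B, ‖x + y‖ ^ 2 + ‖x - y‖ ^ 2 ≤ 2 * ‖x‖ ^ 2 + 2 * β ^ 2 * ‖y‖ ^ 2)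
    (x : B) (l : StrongDual ℝ B) (hl : ∀ y, ‖x‖ ^ 2 + l y ≤ ‖x + y‖ ^ 2) (y : B) :
    ‖x + y‖ ^ 2 ≤ ‖x‖ ^ 2 + l y + β ^ 2 * ‖y‖ ^ 2 := by
  have key : ∀ n : ℕ, ∀ y : B, ‖x + y‖ ^ 2 ≤ ‖x‖ ^ 2 + l y +
      β ^ 2 * (1 + (1 / 2) ^ n) * ‖y‖ ^ 2 := by
    intro n
    induction n with
    | zero =>
      intro y
      have h1 := hsmooth x y
      have h2 := hl (-y)
      rw [map_neg, ← sub_eq_add_neg x y] at h2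
      simp only [pow_zero]
      linarith
    | succ n ih =>
      intro y
      have h1 := hsmooth (x + (1 / 2 : ℝ) • y) ((1 / 2 : ℝ) • y)
      have h2 := ih ((1 / 2 : ℝ) • y)
      have e1 : x + (1 / 2 : ℝ) • y + (1 / 2 : ℝ) • y = x + y := by module
      have e2 : x + (1 / 2 : ℝ) • y - (1 / 2 : ℝ) • y = x := by module
      have e3 : ‖(1 / 2 : ℝ) • y‖ = 1 / 2 * ‖y‖ := by
        rw [norm_smul]; norm_num
      rw [e1, e2, e3] at h1
      rw [e3, map_smul, smul_eq_mul] at h2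
      have e4 : ((1 : ℝ) / 2) ^ (n + 1) = (1 / 2) * (1 / 2) ^ n := by ring
      rw [e4]
      nlinarith
  have lim : Filter.Tendsto (fun n : ℕ => ‖x‖ ^ 2 + l y +
      β ^ 2 * (1 + (1 / 2 : ℝ) ^ n) * ‖y‖ ^ 2) Filter.atTop
      (nhds (‖x‖ ^ 2 + l y + β ^ 2 * (1 + 0) * ‖y‖ ^ 2)) := by
    have := tendsto_pow_atTop_nhds_zero_of_lt_one (r := (1 / 2 : ℝ)) (by norm_num) (by norm_num)
    exact (((this.const_add 1).const_mul _).mul_const _).const_add _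
  have := ge_of_tendsto' lim (fun n => key n y)
  simpa using this

lemma exists_grad {B : Type*} [NormedAddCommGroup B] [NormedSpace ℝ B] (β : ℝ)
    (hsmooth : ∀ x y : B, ‖x + y‖ ^ 2 + ‖x - y‖ ^ 2 ≤ 2 * ‖x‖ ^ 2 + 2 * β ^ 2 * ‖y‖ ^ 2) :
    ∃ l : B → StrongDual ℝ B, Continuous l ∧ (∀ x, ‖l x‖ ≤ 2 * ‖x‖) ∧
      ∀ x y, ‖x + y‖ ^ 2 ≤ ‖x‖ ^ 2 + l x y + β ^ 2 * ‖y‖ ^ 2 := by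
  choose φ hφ1 hφ2 using fun x : B => exists_dual_vector'' ℝ x
  have hlow : ∀ x y, ‖x‖ ^ 2 + ((2 * ‖x‖) • φ x) y ≤ ‖x + y‖ ^ 2 := by
    intro x y
    have h1 : φ x (x + y) ≤ ‖x + y‖ := by
      have := (φ x).le_of_opNorm_le (hφ1 x) (x + y)
      have h3 := le_abs_self (φ x (x + y))
      rw [Real.norm_eq_abs] at this
      linarith
    rw [map_add, hφ2] at h1
    simp only [RCLike.ofReal_real_eq_id, id_eq] at h1
    simp only [FunLike.coe_smul, Pi.smul_apply, smul_eq_mul]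
    nlinarith [sq_nonneg (‖x + y‖ - ‖x‖), norm_nonneg x]
  have hup : ∀ x y, ‖x + y‖ ^ 2 ≤ ‖x‖ ^ 2 + ((2 * ‖x‖) • φ x) y + β ^ 2 * ‖y‖ ^ 2 :=
    fun x y => smooth_upper β hsmooth x _ (hlow x) y
  refine ⟨fun x => (2 * ‖x‖) • φ x, ?_, ?_, hup⟩
  · generalize hL : (fun x => (2 * ‖x‖) • φ x) = L
    have hlow' : ∀ x y, ‖x‖ ^ 2 + L x y ≤ ‖x + y‖ ^ 2 := by rw [← hL]; exact hlow
    have hup' : ∀ x y, ‖x + y‖ ^ 2 ≤ ‖x‖ ^ 2 + L x y + β ^ 2 * ‖y‖ ^ 2 := by rw [← hL]; exact hup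
    have one : ∀ x x' h : B, L x h - L x' h ≤ β ^ 2 * (‖h‖ ^ 2 + ‖x' - x‖ ^ 2) := by
      intro x x' h
      have h1 := hup' x' h
      have h2 := hlow' x (x' - x + h)
      have h3 := hup' x (x' - x)
      rw [show x + (x' - x + h) = x' + h by abel, map_add] at h2
      rw [show x + (x' - x) = x' by abel] at h3
      linarith
    have two : ∀ x x' h : B, ‖h‖ = 1 → ‖x' - x‖ ≠ 0 → L x h - L x' h ≤ 2 * β ^ 2 * ‖x' - x‖ := by
      intro x x' h hh hne
      have := one x x' (‖x' - x‖ • h)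
      rw [norm_smul, hh, map_smul, map_smul, norm_norm, smul_eq_mul, smul_eq_mul] at this
      have hpos : 0 < ‖x' - x‖ := lt_of_le_of_ne (norm_nonneg _) (Ne.symm hne)
      refine le_of_mul_le_mul_left ?_ hpos
      nlinarith
    have lip : LipschitzWith (2 * ‖β‖₊ ^ 2) L := by
      refine LipschitzWith.of_dist_le_mul fun x x' => ?_
      rw [dist_eq_norm, dist_eq_norm]
      by_cases hne : ‖x' - x‖ = 0
      · rw [norm_eq_zero, sub_eq_zero] at hne
        subst hne; simp
      · refine ContinuousLinearMap.opNorm_le_of_unit_norm (by positivity) ?_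
        intro h hh
        rw [Real.norm_eq_abs, abs_le]
        have h1 := two x x' h hh hne
        have h2 := two x' x h hh (by rwa [norm_sub_rev])
        rw [norm_sub_rev x' x] at h1
        simp only [FunLike.coe_sub, Pi.sub_apply, NNReal.coe_mul, NNReal.coe_pow, coe_nnnorm,
          Real.norm_eq_abs, sq_abs, NNReal.coe_ofNat]
        constructor <;> linarith
    exact lip.continuous
  · intro x
    rw [norm_smul, Real.norm_of_nonneg (by positivity)]
    nlinarith [hφ1 x, norm_nonneg x]

lemma cosh_chord (a c u : ℝ) (ha : 0 < a) (hc : 0 < c) (h1 : (a - c) ^ 2 ≤ u ^ 2)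
    (h2 : u ^ 2 ≤ (a + c) ^ 2) :
    Real.cosh u ≤ Real.cosh a * Real.cosh c +
      (u ^ 2 - a ^ 2 - c ^ 2) / (2 * a * c) * (Real.sinh a * Real.sinh c) := by
  set θ := (u ^ 2 - (a - c) ^ 2) / (4 * a * c) with hθ
  have hac : 0 < 4 * a * c := by positivity
  have hθ0 : 0 ≤ θ := div_nonneg (by linarith) hac.le
  have hθ1 : θ ≤ 1 := by rw [hθ, div_le_one hac]; nlinarith
  have hu : u ^ 2 = (1 - θ) * (a - c) ^ 2 + θ * (a + c) ^ 2 := by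
    rw [hθ]; field_simp; ring
  have key : Real.cosh u ≤ (1 - θ) * Real.cosh (a - c) + θ * Real.cosh (a + c) := by
    refine hasSum_le (fun n => ?_) (Real.hasSum_cosh u)
      (((Real.hasSum_cosh (a - c)).mul_left (1 - θ)).add ((Real.hasSum_cosh (a + c)).mul_left θ))
    have := (convexOn_pow (𝕜 := ℝ) n).2 (Set.mem_Ici.2 (sq_nonneg (a - c)))
      (Set.mem_Ici.2 (sq_nonneg (a + c))) (by linarith : 0 ≤ 1 - θ) hθ0 (by ring)
    simp only [smul_eq_mul] at this
    rw [← hu, ← pow_mul, ← pow_mul, ← pow_mul] at this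
    calc u ^ (2 * n) / ((2 * n).factorial : ℝ) ≤ ((1 - θ) * (a - c) ^ (2 * n) + θ * (a + c) ^ (2 * n))
          / ((2 * n).factorial : ℝ) := by gcongr
      _ = _ := by ring
  have hr : (u ^ 2 - a ^ 2 - c ^ 2) / (2 * a * c) = 2 * θ - 1 := by
    rw [hθ]; field_simp; ring
  rw [hr]
  rw [Real.cosh_add, Real.cosh_sub] at key
  linarith

lemma sinh_le_mul_cosh (a : ℝ) (ha : 0 ≤ a) : Real.sinh a ≤ a * Real.cosh a := by
  refine hasSum_le (fun n => ?_) (Real.hasSum_sinh a) ((Real.hasSum_cosh a).mul_left a)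
  rw [pow_succ, mul_comm a, div_mul_eq_mul_div]
  have : ((2 * n).factorial : ℝ) ≤ ((2 * n + 1).factorial : ℝ) := by
    exact_mod_cast Nat.factorial_le (by omega)
  have h0 : (0 : ℝ) < ((2 * n).factorial : ℝ) := by positivity
  gcongr

lemma scalar_ineq (a c u d b : ℝ) (ha : 0 < a) (hc : 0 < c) (hb : 1 ≤ b)
    (h1 : (a - c) ^ 2 ≤ u ^ 2) (h2 : u ^ 2 ≤ (a + c) ^ 2)
    (h3 : u ^ 2 ≤ a ^ 2 + 2 * a * d + b * c ^ 2) :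
    Real.cosh u ≤ Real.cosh a + d * Real.sinh a + b * Real.cosh a * (Real.exp c - 1 - c) := by
  have h := cosh_chord a c u ha hc h1 h2
  set r := (u ^ 2 - a ^ 2 - c ^ 2) / (2 * a * c) with hr
  have hr1 : r ≤ 1 := by rw [hr, div_le_one (by positivity)]; nlinarith
  have hu : u ^ 2 = a ^ 2 + c ^ 2 + 2 * a * c * r := by rw [hr]; field_simp; ring
  have hsc : c ≤ Real.sinh c := Real.self_le_sinh_iff.2 hc.le
  have hsa : 0 ≤ Real.sinh a := Real.sinh_nonneg_iff.2 ha.le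
  have hca : Real.sinh a < Real.cosh a := Real.sinh_lt_cosh a
  have hec : Real.exp c = Real.cosh c + Real.sinh c := (Real.cosh_add_sinh c).symm
  have hquad : c ^ 2 / 2 ≤ Real.exp c - 1 - c := by
    linarith [Real.quadratic_le_exp_of_nonneg hc.le]
  have hs := sinh_le_mul_cosh a ha.le
  -- `a * d ≥ a * c * r - (b-1) c² / 2`
  have hd : a * c * r - (b - 1) * c ^ 2 / 2 ≤ a * d := by nlinarith
  have hA : 0 ≤ (Real.cosh a - r * Real.sinh a) * (Real.sinh c - c) := by
    apply mul_nonneg _ (by linarith)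
    nlinarith
  have hB : (b - 1) * c ^ 2 / 2 * Real.sinh a ≤
      a * ((b - 1) * Real.cosh a * (Real.exp c - 1 - c)) := by
    have e1 : (b - 1) * c ^ 2 / 2 * Real.sinh a ≤ (b - 1) * c ^ 2 / 2 * (a * Real.cosh a) :=
      mul_le_mul_of_nonneg_left hs (by have : 0 ≤ b - 1 := by linarith
                                       positivity)
    have e2 : ((b - 1) * (a * Real.cosh a)) * (c ^ 2 / 2) ≤
        ((b - 1) * (a * Real.cosh a)) * (Real.exp c - 1 - c) :=
      mul_le_mul_of_nonneg_left hquad (by have : 0 ≤ b - 1 := by linarith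
                                          have := Real.cosh_pos a
                                          positivity)
    linarith
  have hC := mul_le_mul_of_nonneg_right hd hsa
  have hA' := mul_nonneg ha.le hA
  refine le_trans h (le_of_mul_le_mul_left ?_ ha)
  rw [hec] at hB ⊢
  nlinarith

lemma exp_quad (x y : ℝ) (hx : 0 ≤ x) (hxy : x ≤ y) (hy : 0 < y) :
    Real.exp x - 1 - x ≤ x ^ 2 * ((Real.exp y - y - 1) / y ^ 2) := by
  have hs : ∀ x : ℝ, HasSum (fun n : ℕ => x ^ (n + 2) / ((n + 2).factorial : ℝ))
      (Real.exp x - 1 - x) := by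
    intro x
    have := NormedSpace.expSeries_div_hasSum_exp x
    rw [← Real.exp_eq_exp_ℝ] at this
    have := (hasSum_nat_add_iff' 2).2 this
    have e : Real.exp x - 1 - x = Real.exp x - ∑ i ∈ Finset.range 2, x ^ i / (i.factorial : ℝ) := by
      simp [Finset.sum_range_succ]; ring
    rw [e]
    exact this
  have h2 := (hs y).mul_left (x ^ 2 / y ^ 2)
  have : Real.exp x - 1 - x ≤ x ^ 2 / y ^ 2 * (Real.exp y - 1 - y) := by
    refine hasSum_le (fun n => ?_) (hs x) h2
    have : x ^ n ≤ y ^ n := pow_le_pow_left₀ hx hxy n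
    rw [show x ^ 2 / y ^ 2 * (y ^ (n + 2) / ((n + 2).factorial : ℝ)) =
      x ^ 2 * y ^ n / ((n + 2).factorial : ℝ) by field_simp; ring]
    rw [pow_add, mul_comm]
    gcongr
  refine this.trans (le_of_eq ?_)
  ring

lemma exists_cosh_grad {B : Type*} [NormedAddCommGroup B] [NormedSpace ℝ B] (β : ℝ) (hβ : 1 ≤ β)
    (hsmooth : ∀ x y : B, ‖x + y‖ ^ 2 + ‖x - y‖ ^ 2 ≤ 2 * ‖x‖ ^ 2 + 2 * β ^ 2 * ‖y‖ ^ 2)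
    (ρ : ℝ) (hρ : 0 < ρ) :
    ∃ L : B → StrongDual ℝ B,
      (∀ {Ω : Type _} (m : MeasurableSpace Ω) (S : Ω → B), StronglyMeasurable[m] S →
        StronglyMeasurable[m] (fun ω => L (S ω))) ∧
      (∀ x, ‖L x‖ ≤ ρ * Real.sinh (ρ * ‖x‖)) ∧
      ∀ x y, Real.cosh (ρ * ‖x + y‖) ≤ Real.cosh (ρ * ‖x‖) + L x y +
        β ^ 2 * Real.cosh (ρ * ‖x‖) * (Real.exp (ρ * ‖y‖) - 1 - ρ * ‖y‖) := by
  obtain ⟨l, hlc, hln, hl⟩ := exists_grad β hsmooth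
  have hb : 1 ≤ β ^ 2 := by nlinarith
  refine ⟨fun x => (ρ * Real.sinh (ρ * ‖x‖) / (2 * ‖x‖)) • l x, ?_, ?_, ?_⟩
  · intro Ω m S hS
    have h1 : StronglyMeasurable[m] (fun ω => l (S ω)) := hlc.comp_stronglyMeasurable hS
    have h2 : Measurable[m] (fun ω => ‖S ω‖) := hS.norm.measurable
    have h3 : Measurable (fun t : ℝ => ρ * Real.sinh (ρ * t) / (2 * t)) := by fun_prop
    exact (h3.comp h2).stronglyMeasurable.smul h1
  · intro x
    have hs : 0 ≤ Real.sinh (ρ * ‖x‖) := Real.sinh_nonneg_iff.2 (by positivity)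
    rw [norm_smul, Real.norm_of_nonneg (by positivity)]
    by_cases hx : ‖x‖ = 0
    · simp [hx]
    · have : 0 < ‖x‖ := lt_of_le_of_ne (norm_nonneg _) (Ne.symm hx)
      calc _ ≤ ρ * Real.sinh (ρ * ‖x‖) / (2 * ‖x‖) * (2 * ‖x‖) := by
            gcongr; exact hln x
        _ = _ := by field_simp
  · intro x y
    have hq0 : ∀ c : ℝ, 0 ≤ c → 0 ≤ Real.exp c - 1 - c := fun c hc => by
      linarith [Real.add_one_le_exp c]
    by_cases hy : y = 0
    · subst hy; simp
    have hyp : 0 < ‖y‖ := norm_pos_iff.2 hy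
    by_cases hx : x = 0
    · subst hx
      simp only [zero_add, norm_zero, mul_zero, Real.cosh_zero, Real.sinh_zero, zero_div, zero_smul,
        FunLike.coe_zero, Pi.zero_apply, add_zero, mul_one]
      have h1 := hq0 (ρ * ‖y‖) (by positivity)
      have h2 : ρ * ‖y‖ ≤ Real.sinh (ρ * ‖y‖) := Real.self_le_sinh_iff.2 (by positivity)
      have h3 := Real.cosh_add_sinh (ρ * ‖y‖)
      nlinarith
    have hxp : 0 < ‖x‖ := norm_pos_iff.2 hx
    have := scalar_ineq (ρ * ‖x‖) (ρ * ‖y‖) (ρ * ‖x + y‖) (ρ * l x y / (2 * ‖x‖)) (β ^ 2)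
      (by positivity) (by positivity) hb ?_ ?_ ?_
    · refine this.trans (le_of_eq ?_)
      simp only [FunLike.coe_smul, Pi.smul_apply, smul_eq_mul]
      ring
    · have h1 : |‖x‖ - ‖y‖| ≤ ‖x + y‖ := by
        have := abs_norm_sub_norm_le x (-y)
        simpa using this
      have h2 := sq_le_sq' (by linarith [norm_nonneg (x + y), abs_nonneg (‖x‖ - ‖y‖)]) h1
      rw [sq_abs] at h2
      nlinarith [sq_nonneg ρ]
    · have h1 := norm_add_le x y
      have : ρ * ‖x + y‖ ≤ ρ * ‖x‖ + ρ * ‖y‖ := by nlinarith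
      exact pow_le_pow_left₀ (by positivity) this 2
    · have h1 := hl x y
      rw [show (ρ * ‖x‖) ^ 2 + 2 * (ρ * ‖x‖) * (ρ * l x y / (2 * ‖x‖)) + β ^ 2 * (ρ * ‖y‖) ^ 2
        = ρ ^ 2 * (‖x‖ ^ 2 + l x y + β ^ 2 * ‖y‖ ^ 2) by field_simp, mul_pow]
      gcongr

/-- Projection onto the closed unit ball. -/
noncomputable def projB {B : Type*} [NormedAddCommGroup B] [NormedSpace ℝ B] (w : B) : B :=
  (max 1 ‖w‖)⁻¹ • w

lemma trunc_smul {B : Type*} [NormedAddCommGroup B] [NormedSpace ℝ B] (l : ℝ) (y : B) :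
    l • (truncB (l • y) • y) = projB (l • y) := by
  rw [smul_comm]
  unfold truncB projB
  by_cases h : l • y = 0
  · simp [h]
  · rw [if_neg h]
    congr 1
    have hp : 0 < ‖l • y‖ := norm_pos_iff.2 h
    rcases le_total 1 ‖l • y‖ with h1 | h1
    · rw [min_eq_left h1, max_eq_right h1, one_div]
    · rw [min_eq_right h1, max_eq_left h1, div_self hp.ne', inv_one]

lemma continuous_projB {B : Type*} [NormedAddCommGroup B] [NormedSpace ℝ B] :
    Continuous (projB : B → B) := by
  unfold projB
  refine Continuous.smul (Continuous.inv₀ (by fun_prop) fun x => ?_) continuous_id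
  have := le_max_left 1 ‖x‖
  linarith

lemma norm_projB {B : Type*} [NormedAddCommGroup B] [NormedSpace ℝ B] (w : B) :
    ‖projB w‖ = (max 1 ‖w‖)⁻¹ * ‖w‖ := by
  have : 0 < max 1 ‖w‖ := lt_of_lt_of_le one_pos (le_max_left _ _)
  unfold projB
  rw [norm_smul, Real.norm_of_nonneg (by positivity)]

lemma norm_projB_le_one {B : Type*} [NormedAddCommGroup B] [NormedSpace ℝ B] (w : B) :
    ‖projB w‖ ≤ 1 := by
  have : 0 < max 1 ‖w‖ := lt_of_lt_of_le one_pos (le_max_left _ _)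
  rw [norm_projB, inv_mul_le_one₀ this]
  exact le_max_right _ _

lemma norm_projB_le {B : Type*} [NormedAddCommGroup B] [NormedSpace ℝ B] (w : B) :
    ‖projB w‖ ≤ ‖w‖ := by
  rw [norm_projB]
  have : (max 1 ‖w‖)⁻¹ ≤ 1 := inv_le_one_of_one_le₀ (le_max_left _ _)
  nlinarith [norm_nonneg w]

lemma Kp_pos (p : ℝ) (hp : 1 < p) : 0 < Kp p := by
  unfold Kp
  have : 0 < p - 1 := by linarith
  have : 0 < p := by linarith
  positivity

lemma sub_one_le_Kp (p t : ℝ) (hp : 1 < p) (ht : 0 ≤ t) : t - 1 ≤ Kp p * t ^ p := by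
  have h0 : 0 < p - 1 := by linarith
  have h1 : 0 < p := by linarith
  have hq : 0 < (p - 1) / p := by positivity
  have hb := one_add_mul_self_le_rpow_one_add (s := t * ((p - 1) / p) - 1)
    (by have : 0 ≤ t * ((p - 1) / p) := by positivity
        linarith) hp.le
  rw [add_sub_cancel, Real.mul_rpow ht hq.le] at hb
  unfold Kp
  have e : ((p - 1) / p) ^ p = ((p - 1) / p) ^ (p - 1) * ((p - 1) / p) := by
    rw [← Real.rpow_add_one hq.ne']; ring_nf
  rw [e] at hb
  have : 1 + p * (t * ((p - 1) / p) - 1) = (p - 1) * (t - 1) := by field_simp; ring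
  rw [this] at hb
  refine le_of_mul_le_mul_left (hb.trans (le_of_eq ?_)) h0
  ring

lemma norm_projB_sub {B : Type*} [NormedAddCommGroup B] [NormedSpace ℝ B] (w : B) (p : ℝ)
    (hp : 1 < p) : ‖projB w - w‖ ≤ Kp p * ‖w‖ ^ p := by
  have hK := Kp_pos p hp
  rcases le_total ‖w‖ 1 with h | h
  · have : projB w = w := by unfold projB; rw [max_eq_left h]; simp
    rw [this, sub_self, norm_zero]; positivity
  · have hw : 0 < ‖w‖ := by linarith
    have : projB w - w = (‖w‖⁻¹ - 1) • w := by
      unfold projB; rw [max_eq_right h]; module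
    rw [this, norm_smul, Real.norm_of_nonpos (by linarith [inv_le_one_of_one_le₀ h])]
    have e : -(‖w‖⁻¹ - 1) * ‖w‖ = ‖w‖ - 1 := by field_simp; ring
    rw [e]
    exact sub_one_le_Kp p _ hp hw.le

lemma norm_pow_split {B : Type*} [NormedAddCommGroup B] [NormedSpace ℝ B] (l p : ℝ) (x z μ : B)
    (hl : 0 ≤ l) (hp : 1 < p) :
    ‖l • (x - z)‖ ^ p ≤ l ^ p * 2 ^ (p - 1) * (‖x - μ‖ ^ p + ‖μ - z‖ ^ p) := by
  have h1 : ‖x - z‖ ≤ ‖x - μ‖ + ‖μ - z‖ := by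
    have := norm_add_le (x - μ) (μ - z)
    rwa [sub_add_sub_cancel] at this
  have h2 : (‖x - μ‖ + ‖μ - z‖) ^ p ≤ 2 ^ (p - 1) * (‖x - μ‖ ^ p + ‖μ - z‖ ^ p) := by
    have := NNReal.rpow_add_le_mul_rpow_add_rpow ‖x - μ‖₊ ‖μ - z‖₊ hp.le
    exact_mod_cast this
  rw [norm_smul, Real.norm_of_nonneg hl, Real.mul_rpow hl (norm_nonneg _), mul_assoc]
  have h3 : ‖x - z‖ ^ p ≤ (‖x - μ‖ + ‖μ - z‖) ^ p :=
    Real.rpow_le_rpow (norm_nonneg _) h1 (by linarith)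
  exact mul_le_mul_of_nonneg_left (h3.trans h2) (Real.rpow_nonneg hl _)

lemma condExp_affine {Ω : Type*} {m mΩ : MeasurableSpace Ω} {P : Measure Ω} [IsProbabilityMeasure P]
    (hm : m ≤ mΩ) (U W a b : Ω → ℝ) (hU : Integrable U P) (hW : Integrable W P)
    (ha : StronglyMeasurable[m] a) (hb : StronglyMeasurable[m] b)
    (ha0 : ∀ ω, 0 ≤ a ω) (hb0 : ∀ ω, 0 ≤ b ω)
    (h : ∀ᵐ ω ∂P, U ω ≤ a ω * W ω + b ω) :
    ∀ᵐ ω ∂P, (P[U | m]) ω ≤ a ω * (P[W | m]) ω + b ω := by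
  set c : Ω → ℝ := fun ω => (1 + a ω + b ω)⁻¹ with hc
  have hpos : ∀ ω, 0 < 1 + a ω + b ω := fun ω => by linarith [ha0 ω, hb0 ω]
  have hcpos : ∀ ω, 0 < c ω := fun ω => inv_pos.2 (hpos ω)
  have hcm : StronglyMeasurable[m] c :=
    ((stronglyMeasurable_const.add ha).add hb).measurable.inv.stronglyMeasurable
  have hcam : StronglyMeasurable[m] (c * a) := hcm.mul ha
  have hcbm : StronglyMeasurable[m] (c * b) := hcm.mul hb
  have hc1 : ∀ ω, ‖c ω‖ ≤ 1 := fun ω => by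
    rw [Real.norm_of_nonneg (hcpos ω).le]
    exact inv_le_one_of_one_le₀ (by linarith [ha0 ω, hb0 ω])
  have hca1 : ∀ ω, ‖(c * a) ω‖ ≤ 1 := fun ω => by
    rw [Pi.mul_apply, Real.norm_of_nonneg (mul_nonneg (hcpos ω).le (ha0 ω))]
    simp only [hc]
    rw [inv_mul_le_one₀ (hpos ω)]; linarith [hb0 ω]
  have hcb1 : ∀ ω, ‖(c * b) ω‖ ≤ 1 := fun ω => by
    rw [Pi.mul_apply, Real.norm_of_nonneg (mul_nonneg (hcpos ω).le (hb0 ω))]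
    simp only [hc]
    rw [inv_mul_le_one₀ (hpos ω)]; linarith [ha0 ω]
  have i1 : Integrable (c * U) P :=
    hU.bdd_mul (hcm.mono hm).aestronglyMeasurable (Filter.Eventually.of_forall hc1)
  have i2 : Integrable ((c * a) * W) P :=
    hW.bdd_mul (hcam.mono hm).aestronglyMeasurable (Filter.Eventually.of_forall hca1)
  have i3 : Integrable (c * b) P :=
    Integrable.of_bound (hcbm.mono hm).aestronglyMeasurable 1 (Filter.Eventually.of_forall hcb1)
  have hle : (c * U) ≤ᵐ[P] (c * a) * W + c * b := by
    filter_upwards [h] with ω hω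
    simp only [Pi.mul_apply, Pi.add_apply]
    nlinarith [hcpos ω]
  have h1 := condExp_mono (m := m) i1 (i2.add i3) hle
  have h2 := condExp_add i2 i3 m
  have h3 := condExp_mul_of_stronglyMeasurable_left hcm i1 hU
  have h4 := condExp_mul_of_stronglyMeasurable_left hcam i2 hW
  have h5 : P[c * b | m] = c * b := condExp_of_stronglyMeasurable hm hcbm i3
  filter_upwards [h1, h2, h3, h4] with ω g1 g2 g3 g4
  rw [g2, g3, Pi.add_apply, g4, h5] at g1
  simp only [Pi.mul_apply] at g1
  refine le_of_mul_le_mul_left ?_ (hcpos ω)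
  linarith

section step
variable {B : Type*} [NormedAddCommGroup B] [NormedSpace ℝ B] [CompleteSpace B]
    {Ω : Type*} {m mΩ : MeasurableSpace Ω} {P : Measure Ω} [IsProbabilityMeasure P]

lemma step_bounds (hm : m ≤ mΩ) (X : Ω → B) (μ : B) (p v : ℝ)
    (hp1 : 1 < p) (hp2 : p ≤ 2)
    (hint : Integrable X P)
    (hmom : Integrable (fun ω => ‖X ω - μ‖ ^ p) P)
    (hcondmean : P[X | m] =ᵐ[P] fun _ => μ)
    (hcondmom : ∀ᵐ ω ∂P, (P[fun ω' => ‖X ω' - μ‖ ^ p | m]) ω ≤ v)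
    (Z : Ω → B) (hZ : StronglyMeasurable[m] Z)
    (lam : Ω → ℝ) (hlam : StronglyMeasurable[m] lam) (hpos : ∀ ω, 0 < lam ω)
    (ζ : Ω → B) (hζ : ζ = fun ω => projB (lam ω • (X ω - Z ω))) :
    Integrable ζ P ∧
    (∀ᵐ ω ∂P, ‖(P[ζ | m]) ω - lam ω • (μ - Z ω)‖ ≤
      Kp p * 2 ^ (p - 1) * (lam ω ^ p * (v + ‖μ - Z ω‖ ^ p))) ∧
    (∀ᵐ ω ∂P, (P[fun ω' => ‖ζ ω' - (P[ζ | m]) ω'‖ ^ 2 | m]) ω ≤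
      2 ^ (p + 1) * (lam ω ^ p * (v + ‖μ - Z ω‖ ^ p))) := by
  have hp0 : 0 < p := by linarith
  have hK := Kp_pos p hp1
  have hZ' : AEStronglyMeasurable Z P := (hZ.mono hm).aestronglyMeasurable
  have hlam' : AEStronglyMeasurable lam P := (hlam.mono hm).aestronglyMeasurable
  have hζm : AEStronglyMeasurable ζ P := by
    rw [hζ]
    exact continuous_projB.comp_aestronglyMeasurable (hlam'.smul (hint.1.sub hZ'))
  have hζ1 : ∀ ω, ‖ζ ω‖ ≤ 1 := fun ω => by rw [hζ]; exact norm_projB_le_one _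
  have hζi : Integrable ζ P := Integrable.of_bound hζm 1 (Filter.Eventually.of_forall hζ1)
  have hM1 : ∀ᵐ ω ∂P, ‖(P[ζ | m]) ω‖ ≤ 1 :=
    ae_bdd_norm_condExp_of_ae_bdd_norm (Filter.Eventually.of_forall hζ1)
  have hlp : StronglyMeasurable[m] (fun ω => lam ω ^ p) :=
    (hlam.measurable.pow_const p).stronglyMeasurable
  have hzp : StronglyMeasurable[m] (fun ω => ‖μ - Z ω‖ ^ p) :=
    ((stronglyMeasurable_const.sub hZ).norm.measurable.pow_const p).stronglyMeasurable
  have hlp0 : ∀ ω, 0 ≤ lam ω ^ p := fun ω => Real.rpow_nonneg (hpos ω).le _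
  refine ⟨hζi, ?_, ?_⟩
  · set c : Ω → ℝ := fun ω => (1 + lam ω + lam ω * ‖Z ω‖)⁻¹ with hc
    have hlz : ∀ ω, 0 ≤ lam ω * ‖Z ω‖ := fun ω => mul_nonneg (hpos ω).le (norm_nonneg _)
    have hdpos : ∀ ω, 0 < 1 + lam ω + lam ω * ‖Z ω‖ := fun ω => by linarith [hpos ω, hlz ω]
    have hcpos : ∀ ω, 0 < c ω := fun ω => inv_pos.2 (hdpos ω)
    have hcm : StronglyMeasurable[m] c :=
      ((stronglyMeasurable_const.add hlam).add (hlam.mul hZ.norm)).measurable.inv.stronglyMeasurable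
    have hclm : StronglyMeasurable[m] (c * lam) := hcm.mul hlam
    have hclzm : StronglyMeasurable[m] ((c * lam) • Z) := hclm.smul hZ
    have hc1 : ∀ ω, ‖c ω‖ ≤ 1 := fun ω => by
      rw [Real.norm_of_nonneg (hcpos ω).le]
      exact inv_le_one_of_one_le₀ (by linarith [hpos ω, hlz ω])
    have hcl1 : ∀ ω, ‖(c * lam) ω‖ ≤ 1 := fun ω => by
      rw [Pi.mul_apply, Real.norm_of_nonneg (mul_nonneg (hcpos ω).le (hpos ω).le)]
      simp only [hc]
      rw [inv_mul_le_one₀ (hdpos ω)]; linarith [hlz ω]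
    have hclz1 : ∀ ω, ‖((c * lam) • Z) ω‖ ≤ 1 := fun ω => by
      rw [Pi.smul_apply', norm_smul, Pi.mul_apply,
        Real.norm_of_nonneg (mul_nonneg (hcpos ω).le (hpos ω).le)]
      simp only [hc]
      rw [mul_assoc, inv_mul_le_one₀ (hdpos ω)]; linarith [hpos ω]
    have i1 : Integrable (c • ζ) P :=
      hζi.bdd_smul 1 (hcm.mono hm).aestronglyMeasurable (Filter.Eventually.of_forall hc1)
    have i2 : Integrable ((c * lam) • X) P :=
      hint.bdd_smul 1 (hclm.mono hm).aestronglyMeasurable (Filter.Eventually.of_forall hcl1)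
    have i3 : Integrable ((c * lam) • Z) P :=
      Integrable.of_bound (hclzm.mono hm).aestronglyMeasurable 1 (Filter.Eventually.of_forall hclz1)
    have h1 := condExp_smul_of_aestronglyMeasurable_left hcm.aestronglyMeasurable i1 hζi
    have h2 := condExp_smul_of_aestronglyMeasurable_left hclm.aestronglyMeasurable i2 hint
    have h3 : P[(c * lam) • Z | m] = (c * lam) • Z := condExp_of_stronglyMeasurable hm hclzm i3
    have h4 := condExp_sub i1 (i2.sub i3) m
    have h5 := condExp_sub i2 i3 m
    have h6 := norm_condExp_le (μ := P) (m := m) (c • ζ - ((c * lam) • X - (c * lam) • Z))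
    have h7 := condExp_affine hm (fun ω => ‖(c • ζ - ((c * lam) • X - (c * lam) • Z)) ω‖)
      (fun ω' => ‖X ω' - μ‖ ^ p)
      (fun ω => c ω * (Kp p * (lam ω ^ p * 2 ^ (p - 1))))
      (fun ω => c ω * (Kp p * (lam ω ^ p * 2 ^ (p - 1))) * ‖μ - Z ω‖ ^ p)
      (i1.sub (i2.sub i3)).norm hmom
      (hcm.mul ((hlp.mul_const _).const_mul _))
      ((hcm.mul ((hlp.mul_const _).const_mul _)).mul hzp)
      (fun ω => by have := hcpos ω; have := hlp0 ω; positivity)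
      (fun ω => by have := hcpos ω; have := hlp0 ω; positivity)
      (Filter.Eventually.of_forall fun ω => by
        have e : (c • ζ - ((c * lam) • X - (c * lam) • Z)) ω =
            c ω • (projB (lam ω • (X ω - Z ω)) - lam ω • (X ω - Z ω)) := by
          simp only [Pi.sub_apply, Pi.smul_apply', Pi.mul_apply, hζ]
          module
        simp only [e]
        rw [norm_smul, Real.norm_of_nonneg (hcpos ω).le, mul_assoc (c ω), mul_assoc (c ω),
          ← mul_add]
        refine mul_le_mul_of_nonneg_left ?_ (hcpos ω).le
        refine (norm_projB_sub _ p hp1).trans ?_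
        have := mul_le_mul_of_nonneg_left
          (norm_pow_split (lam ω) p (X ω) (Z ω) μ (hpos ω).le hp1) hK.le
        linarith)
    filter_upwards [h1, h2, h4, h5, h6, h7, hcondmean, hcondmom] with ω g1 g2 g4 g5 g6 g7 g8 g9
    rw [g4, Pi.sub_apply, g1, g5, Pi.sub_apply, g2, h3] at g6
    simp only [Pi.smul_apply', Pi.mul_apply, g8] at g6
    have e : c ω • (P[ζ | m]) ω - ((c ω * lam ω) • μ - (c ω * lam ω) • Z ω) =
        c ω • ((P[ζ | m]) ω - lam ω • (μ - Z ω)) := by module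
    rw [e, norm_smul, Real.norm_of_nonneg (hcpos ω).le] at g6
    have g10 := g6.trans g7
    refine le_of_mul_le_mul_left (g10.trans ?_) (hcpos ω)
    have : 0 ≤ c ω * (Kp p * (lam ω ^ p * 2 ^ (p - 1))) := by
      have := hcpos ω; have := hlp0 ω; positivity
    have := mul_le_mul_of_nonneg_left g9 this
    linarith
  · have hVm : AEStronglyMeasurable (fun ω => ‖ζ ω‖ ^ p) P :=
      (hζm.norm.aemeasurable.pow_const p).aestronglyMeasurable
    have hVi : Integrable (fun ω => ‖ζ ω‖ ^ p) P := by
      refine Integrable.of_bound hVm 1 (Filter.Eventually.of_forall fun ω => ?_)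
      rw [Real.norm_of_nonneg (by positivity)]
      exact Real.rpow_le_one (norm_nonneg _) (hζ1 ω) hp0.le
    have h1 := condExp_affine hm (fun ω => ‖ζ ω‖ ^ p) (fun ω' => ‖X ω' - μ‖ ^ p)
      (fun ω => lam ω ^ p * 2 ^ (p - 1))
      (fun ω => lam ω ^ p * 2 ^ (p - 1) * ‖μ - Z ω‖ ^ p) hVi hmom
      (hlp.mul_const _) ((hlp.mul_const _).mul hzp)
      (fun ω => by have := hlp0 ω; positivity)
      (fun ω => by have := hlp0 ω; positivity)
      (Filter.Eventually.of_forall fun ω => by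
        have h1 := norm_pow_split (lam ω) p (X ω) (Z ω) μ (hpos ω).le hp1
        have h2 : ‖ζ ω‖ ^ p ≤ ‖lam ω • (X ω - Z ω)‖ ^ p := by
          rw [hζ]
          exact Real.rpow_le_rpow (norm_nonneg _) (norm_projB_le _) hp0.le
        linarith)
    have h2 := Integrable.norm_condExp_rpow_le (m := m) hp1.le hVi
    have hsq : ∀ t : ℝ, 0 ≤ t → t ≤ 1 → t ^ 2 ≤ t ^ p := fun t h0 h1 => by
      rcases h0.eq_or_lt with h | h
      · rw [← h, Real.zero_rpow hp0.ne']; norm_num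
      · rw [← Real.rpow_two]
        exact Real.rpow_le_rpow_of_exponent_ge h h1 hp2
    have hMm : StronglyMeasurable[m] (P[ζ | m]) := stronglyMeasurable_condExp
    have hDi : Integrable (fun ω => ‖ζ ω - (P[ζ | m]) ω‖ ^ 2) P := by
      refine Integrable.of_bound
        ((hζm.sub (hMm.mono hm).aestronglyMeasurable).norm.pow 2) 4 ?_
      filter_upwards [hM1] with ω hω
      have := norm_sub_le (ζ ω) ((P[ζ | m]) ω)
      rw [Real.norm_of_nonneg (by positivity)]
      nlinarith [hζ1 ω, norm_nonneg (ζ ω - (P[ζ | m]) ω)]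
    have h3 := condExp_affine hm (fun ω => ‖ζ ω - (P[ζ | m]) ω‖ ^ 2) (fun ω => ‖ζ ω‖ ^ p)
      (fun _ => 2) (fun ω => 2 * ‖(P[ζ | m]) ω‖ ^ p) hDi hVi stronglyMeasurable_const
      ((hMm.norm.measurable.pow_const p).stronglyMeasurable.const_mul 2)
      (fun _ => by norm_num) (fun ω => by positivity)
      (by
        filter_upwards [hM1] with ω hω
        have a1 := norm_sub_le (ζ ω) ((P[ζ | m]) ω)
        have a2 := hsq _ (norm_nonneg _) (hζ1 ω)
        have a3 := hsq _ (norm_nonneg _) hω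
        have a4 : ‖ζ ω - (P[ζ | m]) ω‖ ^ 2 ≤ (‖ζ ω‖ + ‖(P[ζ | m]) ω‖) ^ 2 :=
          pow_le_pow_left₀ (norm_nonneg _) a1 2
        nlinarith [sq_nonneg (‖ζ ω‖ - ‖(P[ζ | m]) ω‖)])
    filter_upwards [h1, h2, h3, hcondmom] with ω g1 g2 g3 g4
    have e : (2 : ℝ) ^ (p + 1) = 4 * 2 ^ (p - 1) := by
      rw [show p + 1 = 2 + (p - 1) by ring, Real.rpow_add two_pos]; norm_num
    rw [e]
    have := mul_le_mul_of_nonneg_left g4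
      (show 0 ≤ lam ω ^ p * 2 ^ (p - 1) by have := hlp0 ω; positivity)
    linarith

lemma step_super (hm : m ≤ mΩ) (β ρ κ R : ℝ) (hρ : 0 < ρ)
    (L : B → StrongDual ℝ B) (S : Ω → B) (hS : StronglyMeasurable[m] S)
    (hSR : ∀ᵐ ω ∂P, ‖S ω‖ ≤ R)
    (hLm : StronglyMeasurable[m] (fun ω => L (S ω)))
    (hLn : ∀ x, ‖L x‖ ≤ ρ * Real.sinh (ρ * ‖x‖))
    (hL : ∀ x y, Real.cosh (ρ * ‖x + y‖) ≤ Real.cosh (ρ * ‖x‖) + L x y +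
        β ^ 2 * Real.cosh (ρ * ‖x‖) * (Real.exp (ρ * ‖y‖) - 1 - ρ * ‖y‖))
    (hq : ∀ t : ℝ, 0 ≤ t → t ≤ 2 → Real.exp (ρ * t) - 1 - ρ * t ≤ κ * t ^ 2) (hκ : 0 ≤ κ)
    (D : Ω → B) (hDi : Integrable D P) (hD0 : P[D | m] =ᵐ[P] 0) (hD2 : ∀ᵐ ω ∂P, ‖D ω‖ ≤ 2)
    (V : Ω → ℝ) (hV : ∀ᵐ ω ∂P, (P[fun ω' => ‖D ω'‖ ^ 2 | m]) ω ≤ V ω)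
    (E : Ω → ℝ) (hE : StronglyMeasurable[m] E) (hE0 : ∀ ω, 0 ≤ E ω) (hE1 : ∀ ω, E ω ≤ 1) :
    Integrable (fun ω => Real.cosh (ρ * ‖S ω + D ω‖) * E ω) P ∧
    ∀ᵐ ω ∂P, (P[fun ω => Real.cosh (ρ * ‖S ω + D ω‖) * E ω | m]) ω ≤
      Real.cosh (ρ * ‖S ω‖) * E ω * (1 + β ^ 2 * κ * V ω) := by
  have hS' := (hS.mono hm).aestronglyMeasurable (μ := P)
  have hE' := (hE.mono hm).aestronglyMeasurable (μ := P)
  have hUi : Integrable (fun ω => Real.cosh (ρ * ‖S ω + D ω‖) * E ω) P := by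
    refine Integrable.of_bound ((Real.continuous_cosh.comp_aestronglyMeasurable
      ((hS'.add hDi.1).norm.const_mul ρ)).mul hE') (Real.cosh (ρ * (R + 2)) * 1) ?_
    filter_upwards [hSR, hD2] with ω h1 h2
    rw [Real.norm_of_nonneg (mul_nonneg (Real.cosh_pos _).le (hE0 ω))]
    have h3 := norm_add_le (S ω) (D ω)
    have h4 : Real.cosh (ρ * ‖S ω + D ω‖) ≤ Real.cosh (ρ * (R + 2)) := by
      rw [Real.cosh_le_cosh, abs_of_nonneg (by positivity)]
      refine le_trans ?_ (le_abs_self _)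
      gcongr; linarith
    exact mul_le_mul h4 (hE1 ω) (hE0 ω) (Real.cosh_pos _).le
  refine ⟨hUi, ?_⟩
  have hELm : StronglyMeasurable[m] (fun ω => E ω • L (S ω)) := hE.smul hLm
  have hELb : ∀ᵐ ω ∂P, ‖E ω • L (S ω)‖ ≤ ρ * Real.sinh (ρ * R) := by
    filter_upwards [hSR] with ω h1
    rw [norm_smul, Real.norm_of_nonneg (hE0 ω)]
    have h2 := hLn (S ω)
    have h3 : ρ * Real.sinh (ρ * ‖S ω‖) ≤ ρ * Real.sinh (ρ * R) := by
      have : Real.sinh (ρ * ‖S ω‖) ≤ Real.sinh (ρ * R) := Real.sinh_le_sinh.2 (by gcongr)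
      gcongr
    nlinarith [hE1 ω, hE0 ω, norm_nonneg (L (S ω))]
  have hlm : AEStronglyMeasurable (fun ω => (E ω • L (S ω)) (D ω)) P :=
    (ContinuousLinearMap.id ℝ (StrongDual ℝ B)).aestronglyMeasurable_comp₂
      (hELm.mono hm).aestronglyMeasurable hDi.1
  have hli : Integrable (fun ω => (E ω • L (S ω)) (D ω)) P := by
    refine Integrable.of_bound hlm (ρ * Real.sinh (ρ * R) * 2) ?_
    filter_upwards [hELb, hD2] with ω h1 h2
    refine ((E ω • L (S ω)).le_opNorm (D ω)).trans ?_
    exact mul_le_mul h1 h2 (norm_nonneg _) ((norm_nonneg _).trans h1)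
  have hl0 := condExp_bilin_of_stronglyMeasurable_left (μ := P) (m := m)
    (ContinuousLinearMap.id ℝ (StrongDual ℝ B)) hELm (g := D) hli hDi
  have hD2i : Integrable (fun ω => ‖D ω‖ ^ 2) P := by
    refine Integrable.of_bound (hDi.1.norm.pow 2) 4 ?_
    filter_upwards [hD2] with ω h
    rw [Real.norm_of_nonneg (by positivity)]
    nlinarith [norm_nonneg (D ω)]
  have hcm : StronglyMeasurable[m] (fun ω => Real.cosh (ρ * ‖S ω‖) * E ω) :=
    (Real.continuous_cosh.comp_stronglyMeasurable (hS.norm.const_mul ρ)).mul hE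
  have hc0 : ∀ ω, 0 ≤ Real.cosh (ρ * ‖S ω‖) * E ω :=
    fun ω => mul_nonneg (Real.cosh_pos _).le (hE0 ω)
  have h1 := condExp_affine hm
    ((fun ω => Real.cosh (ρ * ‖S ω + D ω‖) * E ω) - fun ω => (E ω • L (S ω)) (D ω))
    (fun ω => ‖D ω‖ ^ 2) (fun ω => β ^ 2 * κ * (Real.cosh (ρ * ‖S ω‖) * E ω))
    (fun ω => Real.cosh (ρ * ‖S ω‖) * E ω) (hUi.sub hli) hD2i (hcm.const_mul _) hcm
    (fun ω => mul_nonneg (by positivity) (hc0 ω)) hc0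
    (by
      filter_upwards [hD2] with ω h2
      have a1 := mul_le_mul_of_nonneg_left (hL (S ω) (D ω)) (hE0 ω)
      have a2 := mul_le_mul_of_nonneg_left (hq ‖D ω‖ (norm_nonneg _) h2)
        (mul_nonneg (sq_nonneg β) (hc0 ω))
      simp only [Pi.sub_apply, FunLike.coe_smul, Pi.smul_apply, smul_eq_mul]
      nlinarith)
  have h2 := condExp_sub hUi hli m
  filter_upwards [h1, h2, hl0, hD0, hV] with ω g1 g2 g3 g4 g5
  have g6 : (P[fun ω => (E ω • L (S ω)) (D ω) | m]) ω = 0 := by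
    have := g3
    rw [g4] at this
    simpa using this
  rw [g2, Pi.sub_apply, g6, sub_zero] at g1
  refine g1.trans ?_
  have := mul_le_mul_of_nonneg_left g5 (mul_nonneg (show 0 ≤ β ^ 2 * κ by positivity) (hc0 ω))
  linarith
end step

/-- **Exponential supermartingale bound for the truncated-mean process.** For every
`ρ > 0` there is a nonnegative supermartingale `(Nₙ)` with `N₀ = 1` such that for every
`n ≥ 0`, almost surely
`(1/2) exp(ρ‖ξ̂ₙ - (∑_{m≤n} λₘ)·μ‖ - (ρ²β²𝔠_p(ρ) + ρK_p2^{p-1})Gₙ) ≤ Nₙ`. -/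
theorem stmt10
    {B : Type*} [NormedAddCommGroup B] [NormedSpace ℝ B] [CompleteSpace B]
    [TopologicalSpace.SeparableSpace B]
    {Ω : Type*} {mΩ : MeasurableSpace Ω} {P : Measure Ω} [IsProbabilityMeasure P]
    (β : ℝ) (hβ : 1 ≤ β)
    (hsmooth : ∀ x y : B, ‖x + y‖ ^ 2 + ‖x - y‖ ^ 2 ≤ 2 * ‖x‖ ^ 2 + 2 * β ^ 2 * ‖y‖ ^ 2)
    (ℱ : Filtration ℕ mΩ) (X : ℕ → Ω → B) (μ : B) (p v : ℝ)
    (hp1 : 1 < p) (hp2 : p ≤ 2) (hv : 0 < v)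
    (hadapted : ∀ n : ℕ, 1 ≤ n → StronglyMeasurable[ℱ n] (X n))
    (hint : ∀ n : ℕ, 1 ≤ n → Integrable (X n) P)
    (hmom : ∀ n : ℕ, 1 ≤ n → Integrable (fun ω => ‖X n ω‖ ^ p) P)
    (hcondmean : ∀ n : ℕ, P[X (n + 1) | ℱ n] =ᵐ[P] fun _ => μ)
    (hcondmom : ∀ n : ℕ, ∀ᵐ ω ∂P, (P[fun ω' => ‖X (n + 1) ω' - μ‖ ^ p | ℱ n]) ω ≤ v)
    (Z : ℕ → Ω → B) (hZpred : ∀ n : ℕ, StronglyMeasurable[ℱ n] (Z (n + 1)))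
    (lam : ℕ → Ω → ℝ) (hlampred : ∀ n : ℕ, StronglyMeasurable[ℱ n] (lam (n + 1)))
    (hlampos : ∀ n ω, 0 < lam n ω)
    (S : ℕ → Ω → B)
    (hS : ∀ n ω, S n ω = ∑ m ∈ Finset.range n,
      lam (m + 1) ω •
        (truncB (lam (m + 1) ω • (X (m + 1) ω - Z (m + 1) ω)) • (X (m + 1) ω - Z (m + 1) ω)
          + Z (m + 1) ω
          - ((P[fun ω' => truncB (lam (m + 1) ω' • (X (m + 1) ω' - Z (m + 1) ω')) •
                (X (m + 1) ω' - Z (m + 1) ω') | ℱ m]) ω + Z (m + 1) ω)))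
    (ξ : ℕ → Ω → B)
    (hξ : ∀ n ω, ξ n ω = ∑ m ∈ Finset.range n,
      lam (m + 1) ω •
        (truncB (lam (m + 1) ω • (X (m + 1) ω - Z (m + 1) ω)) • (X (m + 1) ω - Z (m + 1) ω)
          + Z (m + 1) ω))
    (G : ℕ → Ω → ℝ)
    (hG : ∀ n ω, G n ω = ∑ m ∈ Finset.range n,
      lam (m + 1) ω ^ p * (v + ‖μ - Z (m + 1) ω‖ ^ p))
    (ρ : ℝ) (hρ : 0 < ρ) :
    ∃ N : ℕ → Ω → ℝ,
      Supermartingale N ℱ P ∧ (∀ n ω, 0 ≤ N n ω) ∧ (∀ᵐ ω ∂P, N 0 ω = 1) ∧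
        ∀ n : ℕ, ∀ᵐ ω ∂P,
          (1 / 2) * Real.exp (ρ * ‖ξ n ω - (∑ m ∈ Finset.range n, lam (m + 1) ω) • μ‖ -
            (ρ ^ 2 * β ^ 2 * frakC p ρ + ρ * Kp p * 2 ^ (p - 1)) * G n ω) ≤ N n ω := by
  have hρ2 : 0 < 2 * ρ := by linarith
  have hp0 : 0 < p := by linarith
  obtain ⟨L, hLm, hLn, hL⟩ := exists_cosh_grad β hβ hsmooth ρ hρ
  set e2 : ℝ := (Real.exp (2 * ρ) - 2 * ρ - 1) / (2 * ρ) ^ 2 with he2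
  have he20 : 0 ≤ e2 := by
    have := Real.add_one_le_exp (2 * ρ)
    exact div_nonneg (by linarith) (by positivity)
  have hfr : frakC p ρ = 2 ^ (p + 1) * e2 := by unfold frakC; rw [he2]; ring
  set C : ℝ := ρ ^ 2 * β ^ 2 * frakC p ρ with hC
  have hC0 : 0 ≤ C := by rw [hC, hfr]; positivity
  have hK := Kp_pos p hp1
  set g : ℕ → Ω → ℝ := fun n ω => lam (n + 1) ω ^ p * (v + ‖μ - Z (n + 1) ω‖ ^ p) with hg
  have hg0 : ∀ n ω, 0 ≤ g n ω := fun n ω => by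
    have := hlampos (n + 1) ω
    simp only [hg]; positivity
  have hG0 : ∀ n ω, 0 ≤ G n ω := fun n ω => by
    rw [hG]; exact Finset.sum_nonneg fun i _ => hg0 i ω
  have hGs : ∀ n ω, G (n + 1) ω = G n ω + g n ω := fun n ω => by
    rw [hG, hG, Finset.sum_range_succ]
  have hgm : ∀ n, StronglyMeasurable[ℱ n] (g n) := fun n =>
    ((hlampred n).measurable.pow_const p).stronglyMeasurable.mul
      (stronglyMeasurable_const.add ((stronglyMeasurable_const.sub
        (hZpred n)).norm.measurable.pow_const p).stronglyMeasurable)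
  have hGe : ∀ n, G n = fun ω => ∑ i ∈ Finset.range n, g i ω := fun n => funext fun ω => hG n ω
  have hGm : ∀ n, StronglyMeasurable[ℱ n] (G (n + 1)) := fun n => by
    rw [hGe]
    refine Finset.stronglyMeasurable_fun_sum _ fun i hi => ?_
    exact (hgm i).mono (ℱ.mono (by simp at hi; omega))
  have hGm' : ∀ n, StronglyMeasurable[ℱ n] (G n) := fun n => by
    rw [hGe]
    refine Finset.stronglyMeasurable_fun_sum _ fun i hi => ?_
    exact (hgm i).mono (ℱ.mono (by simp at hi; omega))
  set ζ : ℕ → Ω → B := fun n ω => projB (lam (n + 1) ω • (X (n + 1) ω - Z (n + 1) ω)) with hζ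
  set D : ℕ → Ω → B := fun n => ζ n - P[ζ n | ℱ n] with hD
  set T : ℕ → Ω → B := fun n ω => ∑ i ∈ Finset.range n, D i ω with hT
  have hmom' : ∀ n, Integrable (fun ω => ‖X (n + 1) ω - μ‖ ^ p) P := fun n => by
    have hi := hint (n + 1) (by omega)
    refine Integrable.mono' (((hmom (n + 1) (by omega)).add
      (integrable_const (‖μ‖ ^ p))).const_mul (1 ^ p * 2 ^ (p - 1)))
      ((hi.1.sub aestronglyMeasurable_const).norm.aemeasurable.pow_const p).aestronglyMeasurable
      (Filter.Eventually.of_forall fun ω => ?_)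
    rw [Real.norm_of_nonneg (by positivity)]
    have := norm_pow_split 1 p (X (n + 1) ω) μ 0 zero_le_one hp1
    simpa using this
  have hb := fun n => step_bounds (ℱ.le n) (X (n + 1)) μ p v hp1 hp2 (hint (n + 1) (by omega))
    (hmom' n) (hcondmean n) (hcondmom n) (Z (n + 1)) (hZpred n) (lam (n + 1)) (hlampred n)
    (hlampos (n + 1)) (ζ n) rfl
  have hζ1 : ∀ n ω, ‖ζ n ω‖ ≤ 1 := fun n ω => norm_projB_le_one _
  have hDi : ∀ n, Integrable (D n) P := fun n => (hb n).1.sub integrable_condExp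
  have hD2 : ∀ n, ∀ᵐ ω ∂P, ‖D n ω‖ ≤ 2 := fun n => by
    have := ae_bdd_norm_condExp_of_ae_bdd_norm (μ := P) (m := ℱ n)
      (Filter.Eventually.of_forall (hζ1 n))
    filter_upwards [this] with ω h
    have h1 := norm_sub_le (ζ n ω) ((P[ζ n | ℱ n]) ω)
    have h2 := hζ1 n ω
    simp only [hD, Pi.sub_apply]
    linarith
  have hD0 : ∀ n, P[D n | ℱ n] =ᵐ[P] 0 := fun n => by
    have h1 := condExp_sub (hb n).1 (integrable_condExp (f := ζ n) (m := ℱ n) (μ := P)) (ℱ n)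
    have h2 : P[P[ζ n | ℱ n] | ℱ n] = P[ζ n | ℱ n] :=
      condExp_of_stronglyMeasurable (ℱ.le n) stronglyMeasurable_condExp integrable_condExp
    rw [h2, sub_self] at h1
    exact h1
  have hDm : ∀ n, StronglyMeasurable[ℱ (n + 1)] (D n) := fun n => by
    have hle : ℱ n ≤ ℱ (n + 1) := ℱ.mono (by omega)
    refine StronglyMeasurable.sub ?_ (stronglyMeasurable_condExp.mono hle)
    exact continuous_projB.comp_stronglyMeasurable
      (((hlampred n).mono hle).smul ((hadapted (n + 1) (by omega)).sub ((hZpred n).mono hle)))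
  have hTm : ∀ n, StronglyMeasurable[ℱ n] (T n) := fun n => by
    refine Finset.stronglyMeasurable_fun_sum _ fun i hi => ?_
    exact (hDm i).mono (ℱ.mono (by simp at hi; omega))
  have hTs : ∀ n ω, T (n + 1) ω = T n ω + D n ω := fun n ω => by
    simp only [hT, Finset.sum_range_succ]
  have hTb : ∀ n : ℕ, ∀ᵐ ω ∂P, ‖T n ω‖ ≤ 2 * n := fun n => by
    induction n with
    | zero => exact Filter.Eventually.of_forall fun ω => by simp [hT]
    | succ n ih =>
      filter_upwards [ih, hD2 n] with ω h1 h2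
      rw [hTs]
      have := norm_add_le (T n ω) (D n ω)
      push_cast
      linarith
  have hq : ∀ t : ℝ, 0 ≤ t → t ≤ 2 →
      Real.exp (ρ * t) - 1 - ρ * t ≤ (ρ ^ 2 * e2) * t ^ 2 := fun t h0 h2 => by
    have := exp_quad (ρ * t) (2 * ρ) (by positivity) (by nlinarith) hρ2
    refine this.trans (le_of_eq ?_)
    rw [he2]; ring
  have hstep := fun n => step_super (P := P) (ℱ.le n) β ρ (ρ ^ 2 * e2) (2 * n) hρ L (T n) (hTm n)
    (hTb n) (hLm (ℱ n) (T n) (hTm n)) hLn hL hq (by positivity) (D n) (hDi n) (hD0 n) (hD2 n)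
    (fun ω => 2 ^ (p + 1) * g n ω) (hb n).2.2 (fun ω => Real.exp (-(C * G (n + 1) ω)))
    (Real.continuous_exp.comp_stronglyMeasurable ((hGm n).const_mul C).neg)
    (fun ω => (Real.exp_pos _).le)
    (fun ω => Real.exp_le_one_iff.2 (by have := mul_nonneg hC0 (hG0 (n + 1) ω); linarith))
  have hNs : ∀ n, (fun ω => Real.cosh (ρ * ‖T (n + 1) ω‖) * Real.exp (-(C * G (n + 1) ω))) =
      fun ω => Real.cosh (ρ * ‖T n ω + D n ω‖) * Real.exp (-(C * G (n + 1) ω)) := fun n => by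
    funext ω; rw [hTs]
  have hN0 : (fun ω => Real.cosh (ρ * ‖T 0 ω‖) * Real.exp (-(C * G 0 ω))) = fun _ => (1 : ℝ) := by
    funext ω; simp [hT, hG]
  refine ⟨fun n ω => Real.cosh (ρ * ‖T n ω‖) * Real.exp (-(C * G n ω)),
    supermartingale_nat ?_ ?_ ?_, ?_, ?_, ?_⟩
  · intro n
    exact (Real.continuous_cosh.comp_stronglyMeasurable ((hTm n).norm.const_mul ρ)).mul
      (Real.continuous_exp.comp_stronglyMeasurable ((hGm' n).const_mul C).neg)
  · intro n
    cases n with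
    | zero => rw [hN0]; exact integrable_const 1
    | succ n => rw [hNs]; exact (hstep n).1
  · intro n
    rw [hNs]
    filter_upwards [(hstep n).2] with ω h
    refine h.trans ?_
    have e1 : β ^ 2 * (ρ ^ 2 * e2) * (2 ^ (p + 1) * g n ω) = C * g n ω := by
      rw [hC, hfr]; ring
    rw [e1, mul_assoc]
    refine mul_le_mul_of_nonneg_left ?_ (Real.cosh_pos _).le
    have e3 : Real.exp (-(C * G n ω)) = Real.exp (-(C * G (n + 1) ω)) * Real.exp (C * g n ω) := by
      rw [← Real.exp_add, hGs]; ring_nf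
    rw [e3]
    refine mul_le_mul_of_nonneg_left ?_ (Real.exp_pos _).le
    linarith [Real.add_one_le_exp (C * g n ω)]
  · intro n ω
    exact mul_nonneg (Real.cosh_pos _).le (Real.exp_pos _).le
  · exact Filter.Eventually.of_forall fun ω => congrFun hN0 ω
  · intro n
    have hbias : ∀ᵐ ω ∂P, ∀ i : ℕ, ‖(P[ζ i | ℱ i]) ω - lam (i + 1) ω • (μ - Z (i + 1) ω)‖ ≤
        Kp p * 2 ^ (p - 1) * g i ω := ae_all_iff.2 fun i => (hb i).2.1
    filter_upwards [hbias] with ω h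
    have e1 : ξ n ω - (∑ m ∈ Finset.range n, lam (m + 1) ω) • μ = T n ω +
        ∑ i ∈ Finset.range n, ((P[ζ i | ℱ i]) ω - lam (i + 1) ω • (μ - Z (i + 1) ω)) := by
      rw [hξ, Finset.sum_smul, ← Finset.sum_sub_distrib]
      simp only [hT]
      rw [← Finset.sum_add_distrib]
      refine Finset.sum_congr rfl fun i _ => ?_
      rw [smul_add, trunc_smul]
      simp only [hD, Pi.sub_apply, hζ]
      module
    have e2' : ‖∑ i ∈ Finset.range n, ((P[ζ i | ℱ i]) ω - lam (i + 1) ω • (μ - Z (i + 1) ω))‖ ≤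
        Kp p * 2 ^ (p - 1) * G n ω := by
      refine (norm_sum_le _ _).trans ?_
      rw [hG, Finset.mul_sum]
      exact Finset.sum_le_sum fun i _ => h i
    have e3 := norm_add_le (T n ω)
      (∑ i ∈ Finset.range n, ((P[ζ i | ℱ i]) ω - lam (i + 1) ω • (μ - Z (i + 1) ω)))
    rw [← e1] at e3
    have e4 : ρ * ‖ξ n ω - (∑ m ∈ Finset.range n, lam (m + 1) ω) • μ‖ -
        (C + ρ * Kp p * 2 ^ (p - 1)) * G n ω ≤ ρ * ‖T n ω‖ + -(C * G n ω) := by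
      have := mul_le_mul_of_nonneg_left (e3.trans (add_le_add_right e2' _)) hρ.le
      linarith
    have e5 := Real.exp_le_exp.2 e4
    rw [Real.exp_add] at e5
    have e6 : (1 / 2) * Real.exp (ρ * ‖T n ω‖) ≤ Real.cosh (ρ * ‖T n ω‖) := by
      rw [Real.cosh_eq]
      linarith [Real.exp_pos (-(ρ * ‖T n ω‖))]
    have e7 := mul_le_mul_of_nonneg_right e6 (Real.exp_pos (-(C * G n ω))).le
    linarith
end

section
/- Let (X'_n)_{n≥1} be Bochner-integrable 𝔹-valued random variables with E‖X'_n‖^p < ∞, adapted to a filtration (𝒢_n)_{n≥0}, with E[X'_n | 𝒢_{n−1}] = μ almost surely and E[‖X'_n − μ‖^p | 𝒢_{n−1}] ≤ v almost surely for all n ≥ 1. Let Ẑ be a 𝒢₀-measurable 𝔹-valued random variable and r : (0,1] → ℝ_{≥0} a function such that P(‖μ − Ẑ‖ ≥ r(δ')) ≤ δ' for every δ' ∈ (0,1]. Fix δ₁, δ₂ ∈ (0,1) with δ₁ + δ₂ ≤ 1, fix ρ > 0 and λ > 0, and define μ̂_n := (1/n)·Σ_{m=1}^n ( Trunc(λ(X'_m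 − Ẑ))·(X'_m − Ẑ) + Ẑ ). Then with probability at least 1 − δ₁ − δ₂, simultaneously for all n ≥ 1: ‖μ̂_n − μ‖ ≤ λ^{p−1}·(ρ·β²·𝔠_p(ρ) + K_p·2^{p−1})·(v + r(δ₂)^p) + log(2/δ₁)/(λ·ρ·n). -/
open MeasureTheory
open scoped Classical

lemma aux_pow (s q s' q' : ℝ) (hs : 0 ≤ s) (hq : 0 ≤ q) (hss : s ≤ s') (hqq : q ≤ q') (n : ℕ) :
    (0 ≤ (s + q) ^ n + (s - q) ^ n ∧ (s + q) ^ n + (s - q) ^ n ≤ (s' + q') ^ n + (s' - q') ^ n) ∧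
    (0 ≤ (s + q) ^ n - (s - q) ^ n ∧
      (s + q) ^ n - (s - q) ^ n ≤ (s' + q') ^ n - (s' - q') ^ n) := by
  induction n with
  | zero => norm_num
  | succ n ih =>
    obtain ⟨⟨h1, h2⟩, h3, h4⟩ := ih
    have e1 : ∀ a b : ℝ, (a + b) ^ (n+1) + (a - b) ^ (n+1) =
      a * ((a + b) ^ n + (a - b) ^ n) + b * ((a + b) ^ n - (a - b) ^ n) := by intro a b; ring
    have e2 : ∀ a b : ℝ, (a + b) ^ (n+1) - (a - b) ^ (n+1) =
      a * ((a + b) ^ n - (a - b) ^ n) + b * ((a + b) ^ n + (a - b) ^ n) := by intro a b; ring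
    simp only [e1, e2]
    have hs' := hs.trans hss
    have hq' := hq.trans hqq
    refine ⟨⟨by positivity, ?_⟩, by positivity, ?_⟩
    · exact add_le_add (mul_le_mul hss h2 h1 hs') (mul_le_mul hqq h4 h3 hq')
    · exact add_le_add (mul_le_mul hss h4 h3 hs') (mul_le_mul hqq h2 h1 hq')

lemma cosh_mul_le (m d A E : ℝ) (hm : 0 ≤ m) (hd : 0 ≤ d) (hdA : d ≤ A) (hdE : d ≤ E)
    (h : m ^ 2 + d ^ 2 ≤ A ^ 2 + E ^ 2) :
    Real.cosh m * Real.cosh d ≤ Real.cosh A * Real.cosh E := by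
  have hmd : m * d ≤ A * E := by
    have hA : 0 ≤ A := hd.trans hdA
    have hE : 0 ≤ E := hd.trans hdE
    apply le_of_sq_le_sq _ (by positivity)
    have h1 : d ^ 2 ≤ A ^ 2 := by gcongr
    have h2 : d ^ 2 ≤ E ^ 2 := by gcongr
    nlinarith [mul_nonneg (sub_nonneg.2 h1) (sub_nonneg.2 h2), mul_le_mul_of_nonneg_right h (sq_nonneg d)]
  have key : Real.cosh (m + d) + Real.cosh (m - d) ≤ Real.cosh (A + E) + Real.cosh (A - E) := by
    have H1 := (Real.hasSum_cosh (m + d)).add (Real.hasSum_cosh (m - d))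
    have H2 := (Real.hasSum_cosh (A + E)).add (Real.hasSum_cosh (A - E))
    refine hasSum_le (fun n => ?_) H1 H2
    rw [← add_div, ← add_div]
    gcongr ?_ / _
    have := (aux_pow (m ^ 2 + d ^ 2) (2 * (m * d)) (A ^ 2 + E ^ 2) (2 * (A * E)) (by positivity)
      (by positivity) h (by linarith) n).1.2
    rw [pow_mul, pow_mul, pow_mul, pow_mul]
    rw [show (m + d) ^ 2 = m ^ 2 + d ^ 2 + 2 * (m * d) by ring,
      show (m - d) ^ 2 = m ^ 2 + d ^ 2 - 2 * (m * d) by ring,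
      show (A + E) ^ 2 = A ^ 2 + E ^ 2 + 2 * (A * E) by ring,
      show (A - E) ^ 2 = A ^ 2 + E ^ 2 - 2 * (A * E) by ring]
    exact this
  rw [Real.cosh_add, Real.cosh_add, Real.cosh_sub, Real.cosh_sub] at key
  linarith

lemma cosh_second_diff {B : Type*} [NormedAddCommGroup B] [NormedSpace ℝ B]
    (β : ℝ) (hβ : 1 ≤ β)
    (hsmooth : ∀ x y : B, ‖x + y‖ ^ 2 + ‖x - y‖ ^ 2 ≤ 2 * ‖x‖ ^ 2 + 2 * β ^ 2 * ‖y‖ ^ 2)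
    (z w : B) :
    Real.cosh ‖z + w‖ + Real.cosh ‖z - w‖ ≤ 2 * (Real.cosh ‖z‖ * Real.cosh (β * ‖w‖)) := by
  set a := ‖z + w‖ with ha
  set b := ‖z - w‖ with hb
  have hw : |a - b| ≤ 2 * ‖w‖ := by
    have := abs_norm_sub_norm_le (z + w) (z - w)
    have e : z + w - (z - w) = (2:ℝ) • w := by rw [two_smul]; abel
    rw [e, norm_smul] at this
    simpa using this
  have hz : |a - b| ≤ 2 * ‖z‖ := by
    have := abs_norm_sub_norm_le (z + w) (w - z)
    have e : z + w - (w - z) = (2:ℝ) • z := by rw [two_smul]; abel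
    rw [e, norm_smul, norm_sub_rev w z] at this
    simpa using this
  have hbw : ‖w‖ ≤ β * ‖w‖ := le_mul_of_one_le_left (norm_nonneg _) hβ
  have := cosh_mul_le ((a + b) / 2) (|a - b| / 2) ‖z‖ (β * ‖w‖) (by positivity) (by positivity)
    (by linarith) (by linarith) (by
      have := hsmooth z w
      rw [div_pow, div_pow, sq_abs]
      rw [← ha, ← hb] at this
      nlinarith)
  have e : Real.cosh (|a - b| / 2) = Real.cosh ((a - b) / 2) := by
    rw [← Real.cosh_abs ((a-b)/2), abs_div, abs_two]
  rw [e] at this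
  have e1 : Real.cosh a + Real.cosh b = 2 * (Real.cosh ((a + b) / 2) * Real.cosh ((a - b) / 2)) := by
    have h1 := Real.cosh_add ((a + b) / 2) ((a - b) / 2)
    have h2 := Real.cosh_sub ((a + b) / 2) ((a - b) / 2)
    rw [show (a + b) / 2 + (a - b) / 2 = a by ring] at h1
    rw [show (a + b) / 2 - (a - b) / 2 = b by ring] at h2
    linarith
  rw [e1]; linarith

lemma cosh_add_le_exp (a t : ℝ) (ht : 0 ≤ t) : Real.cosh (a + t) ≤ Real.cosh a * Real.exp t := by
  rw [Real.cosh_add, ← Real.cosh_add_sinh t]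
  have h1 : 0 ≤ Real.sinh t := Real.sinh_nonneg_iff.2 ht
  have h2 : Real.sinh a ≤ Real.cosh a := (Real.sinh_lt_cosh a).le
  nlinarith

lemma cosh_ratio (β t : ℝ) (hβ : 1 ≤ β) (ht : 0 ≤ t) :
    Real.cosh (β * t) - 1 ≤ β ^ 2 * Real.exp (β * t) * (Real.cosh t - 1) := by
  have e : ∀ s : ℝ, Real.cosh s - 1 = 2 * Real.sinh (s / 2) ^ 2 := by
    intro s
    have : s = 2 * (s / 2) := by ring
    conv_lhs => rw [this, Real.cosh_two_mul, Real.cosh_sq]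
    ring
  have hsinh : ∀ u : ℝ, 0 ≤ u → Real.sinh u ≤ u * Real.exp u := by
    intro u hu
    rw [Real.sinh_eq]
    have h1 := Real.add_one_le_exp (-(2 * u))
    have h2 : Real.exp (-u) = Real.exp u * Real.exp (-(2*u)) := by rw [← Real.exp_add]; ring_nf
    rw [h2]
    nlinarith [Real.exp_pos u]
  rw [e, e]
  have hb : 0 ≤ β * t / 2 := by positivity
  have h1 : Real.sinh (β * t / 2) ≤ β * Real.exp (β * t / 2) * Real.sinh (t / 2) := by
    calc _ ≤ (β * t / 2) * Real.exp (β * t / 2) := hsinh _ hb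
      _ = β * Real.exp (β * t / 2) * (t / 2) := by ring
      _ ≤ _ := by
        gcongr
        exact Real.self_le_sinh_iff.2 (by positivity)
  have h0 : 0 ≤ Real.sinh (β * t / 2) := Real.sinh_nonneg_iff.2 hb
  have h2 := pow_le_pow_left₀ h0 h1 2
  have h3 : Real.exp (β * t) = Real.exp (β * t / 2) ^ 2 := by rw [← Real.exp_nat_mul]; ring_nf
  rw [h3]
  nlinarith

lemma cosh_taylor_discrete {B : Type*} [NormedAddCommGroup B] [NormedSpace ℝ B]
    (β : ℝ) (hβ : 1 ≤ β)
    (hsmooth : ∀ x y : B, ‖x + y‖ ^ 2 + ‖x - y‖ ^ 2 ≤ 2 * ‖x‖ ^ 2 + 2 * β ^ 2 * ‖y‖ ^ 2)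
    (x : B) (l : B →L[ℝ] ℝ) (hl : ∀ y, Real.cosh ‖x‖ + l y ≤ Real.cosh ‖x + y‖)
    (w : B) (n : ℕ) :
    Real.cosh ‖x + (n:ℝ) • w‖ ≤ Real.cosh ‖x‖ + n * l w
      + Real.cosh ‖x‖ * (β ^ 2 * Real.exp (β * ‖w‖)) *
        (Real.exp (n * ‖w‖) - 1 - n * (1 - Real.exp (-‖w‖))) := by
  set c := ‖w‖ with hc
  set K := Real.cosh ‖x‖ with hK
  set R := β ^ 2 * Real.exp (β * c) with hR
  have hK0 : 0 < K := Real.cosh_pos _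
  have hR0 : 0 ≤ R := by positivity
  have sd : ∀ k : ℕ, Real.cosh ‖x + (k:ℝ) • w + w‖ + Real.cosh ‖x + (k:ℝ) • w - w‖
      - 2 * Real.cosh ‖x + (k:ℝ) • w‖ ≤
      K * R * (Real.exp (k * c) * (Real.exp c + Real.exp (-c) - 2)) := by
    intro k
    have h1 := cosh_second_diff β hβ hsmooth (x + (k:ℝ) • w) w
    have h2 := cosh_ratio β c hβ (norm_nonneg _)
    have h3 : Real.cosh ‖x + (k:ℝ) • w‖ ≤ K * Real.exp (k * c) := by
      refine le_trans ?_ (cosh_add_le_exp _ _ (by positivity))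
      rw [Real.cosh_le_cosh, abs_of_nonneg (norm_nonneg _), abs_of_nonneg (by positivity)]
      refine (norm_add_le _ _).trans ?_
      rw [norm_smul]; simp [hc]
    have h4 : Real.exp c + Real.exp (-c) - 2 = 2 * (Real.cosh c - 1) := by rw [Real.cosh_eq]; ring
    rw [h4]
    have h5 : 0 ≤ Real.cosh c - 1 := by linarith [Real.one_le_cosh c]
    have h6 : 0 ≤ Real.cosh ‖x + (k:ℝ) • w‖ := (Real.cosh_pos _).le
    calc _ ≤ 2 * (Real.cosh ‖x + (k:ℝ) • w‖ * (Real.cosh (β * c) - 1)) := by linarith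
      _ ≤ 2 * ((K * Real.exp (k * c)) * (R * (Real.cosh c - 1))) := by
        gcongr
        linarith [Real.one_le_cosh (β * c)]
      _ = _ := by ring
  have inc : ∀ k : ℕ, Real.cosh ‖x + (k:ℝ) • w + w‖ - Real.cosh ‖x + (k:ℝ) • w‖ ≤
      l w + K * R * (Real.exp ((k+1) * c) - Real.exp (k * c) - (1 - Real.exp (-c))) := by
    intro k
    induction k with
    | zero =>
      have h1 := sd 0
      have h2 := hl (-w)
      simp only [Nat.cast_zero, zero_smul, add_zero, zero_mul, Real.exp_zero, one_mul, zero_add] at *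
      rw [map_neg] at h2
      rw [← sub_eq_add_neg x w] at h2
      linarith
    | succ k ih =>
      have h1 := sd (k+1)
      have e1 : x + ((k+1:ℕ):ℝ) • w - w = x + (k:ℝ) • w := by
        push_cast; rw [add_smul, one_smul]; abel
      have e2 : x + (k:ℝ) • w + w = x + ((k+1:ℕ):ℝ) • w := by
        push_cast; rw [add_smul, one_smul]; abel
      rw [e1] at h1
      rw [e2] at ih
      have e3 : Real.exp ((((k+1:ℕ):ℝ)+1) * c) = Real.exp (((k+1:ℕ):ℝ) * c) * Real.exp c := by
        rw [← Real.exp_add]; ring_nf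
      have e4 : Real.exp ((k:ℝ) * c) = Real.exp (((k+1:ℕ):ℝ) * c) * Real.exp (-c) := by
        rw [← Real.exp_add]; push_cast; ring_nf
      rw [e3]
      rw [e4] at ih
      push_cast at *
      linarith
  induction n with
  | zero => simp [hK]
  | succ n ih =>
    have h := inc n
    have e2 : x + (n:ℝ) • w + w = x + ((n+1:ℕ):ℝ) • w := by
        push_cast; rw [add_smul, one_smul]; abel
    rw [e2] at h
    push_cast at *
    linarith

lemma cosh_taylor {B : Type*} [NormedAddCommGroup B] [NormedSpace ℝ B]
    (β : ℝ) (hβ : 1 ≤ β)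
    (hsmooth : ∀ x y : B, ‖x + y‖ ^ 2 + ‖x - y‖ ^ 2 ≤ 2 * ‖x‖ ^ 2 + 2 * β ^ 2 * ‖y‖ ^ 2)
    (x : B) : ∃ l : B →L[ℝ] ℝ, ∀ y, Real.cosh ‖x + y‖ ≤ Real.cosh ‖x‖ + l y
      + Real.cosh ‖x‖ * β ^ 2 * (Real.exp ‖y‖ - 1 - ‖y‖) := by
  obtain ⟨g, hg1, hg2⟩ := exists_dual_vector'' ℝ x
  simp only [RCLike.ofReal_real_eq_id, id_eq] at hg2
  have hs : 0 ≤ Real.sinh ‖x‖ := Real.sinh_nonneg_iff.2 (norm_nonneg _)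
  have tang : ∀ a b : ℝ, Real.cosh a + Real.sinh a * (b - a) ≤ Real.cosh b := by
    intro a b
    have h1 := Real.add_one_le_exp (b - a)
    have h2 := Real.add_one_le_exp (-(b - a))
    have e1 : Real.exp b = Real.exp a * Real.exp (b - a) := by rw [← Real.exp_add]; ring_nf
    have e2 : Real.exp (-b) = Real.exp (-a) * Real.exp (-(b - a)) := by
      rw [← Real.exp_add]; ring_nf
    rw [Real.cosh_eq, Real.cosh_eq, Real.sinh_eq, e1, e2]
    nlinarith [Real.exp_pos a, Real.exp_pos (-a)]
  refine ⟨Real.sinh ‖x‖ • g, fun y => ?_⟩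
  have hl : ∀ y, Real.cosh ‖x‖ + (Real.sinh ‖x‖ • g) y ≤ Real.cosh ‖x + y‖ := by
    intro y
    refine le_trans ?_ (tang ‖x‖ ‖x + y‖)
    have h1 : g (x + y) ≤ ‖x + y‖ := by
      refine (le_abs_self _).trans ((g.le_opNorm _).trans ?_)
      exact mul_le_of_le_one_left (norm_nonneg _) hg1
    rw [map_add, hg2] at h1
    simp only [smul_apply, smul_eq_mul]
    gcongr
    linarith
  set l := Real.sinh ‖x‖ • g
  have bound : ∀ n : ℕ, Real.cosh ‖x + y‖ ≤ Real.cosh ‖x‖ + l y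
      + Real.cosh ‖x‖ * (β ^ 2 * Real.exp (β * ((1 / ((n:ℝ)+1)) * ‖y‖))) *
        (Real.exp ‖y‖ - 1 - ‖y‖ * Real.exp (-((1 / ((n:ℝ)+1)) * ‖y‖))) := by
    intro n
    have h := cosh_taylor_discrete β hβ hsmooth x l hl ((1 / ((n:ℝ)+1)) • y) (n+1)
    have hn : (0:ℝ) < n + 1 := by positivity
    have e0 : ((n+1:ℕ):ℝ) * (1 / ((n:ℝ)+1)) = 1 := by push_cast; field_simp
    have en : ‖(1 / ((n:ℝ)+1)) • y‖ = (1 / ((n:ℝ)+1)) * ‖y‖ := by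
      rw [norm_smul, Real.norm_of_nonneg (by positivity)]
    rw [smul_smul, en, map_smul, smul_eq_mul, ← mul_assoc _ _ (l y), ← mul_assoc ((n+1:ℕ):ℝ) _ ‖y‖, e0, one_smul,
      one_mul, one_mul] at h
    refine h.trans ?_
    have hK0 : 0 < Real.cosh ‖x‖ := Real.cosh_pos _
    have key : ‖y‖ * Real.exp (-((1 / ((n:ℝ)+1)) * ‖y‖)) ≤
        ((n+1:ℕ):ℝ) * (1 - Real.exp (-((1 / ((n:ℝ)+1)) * ‖y‖))) := by
      set u := (1 / ((n:ℝ)+1)) * ‖y‖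
      have hy : ‖y‖ = ((n+1:ℕ):ℝ) * u := by
        simp only [u]; rw [← mul_assoc, e0, one_mul]
      rw [hy, mul_assoc]
      refine mul_le_mul_of_nonneg_left ?_ (by positivity)
      have h1 := Real.add_one_le_exp u
      have h2 : Real.exp u * Real.exp (-u) = 1 := by rw [← Real.exp_add]; simp
      nlinarith [Real.exp_pos (-u)]
    have := mul_le_mul_of_nonneg_left (sub_le_sub_left key (Real.exp ‖y‖ - 1))
      (show 0 ≤ Real.cosh ‖x‖ * (β ^ 2 * Real.exp (β * ((1 / ((n:ℝ)+1)) * ‖y‖))) by positivity)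
    linarith
  have lim : Filter.Tendsto (fun n : ℕ => Real.cosh ‖x‖ + l y
      + Real.cosh ‖x‖ * (β ^ 2 * Real.exp (β * ((1 / ((n:ℝ)+1)) * ‖y‖))) *
        (Real.exp ‖y‖ - 1 - ‖y‖ * Real.exp (-((1 / ((n:ℝ)+1)) * ‖y‖)))) Filter.atTop
      (nhds (Real.cosh ‖x‖ + l y + Real.cosh ‖x‖ * (β ^ 2 * Real.exp (β * (0 * ‖y‖))) *
        (Real.exp ‖y‖ - 1 - ‖y‖ * Real.exp (-(0 * ‖y‖))))) := by
    have hc : Continuous (fun t : ℝ => Real.cosh ‖x‖ + l y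
      + Real.cosh ‖x‖ * (β ^ 2 * Real.exp (β * (t * ‖y‖))) *
        (Real.exp ‖y‖ - 1 - ‖y‖ * Real.exp (-(t * ‖y‖)))) := by fun_prop
    exact (hc.tendsto 0).comp tendsto_one_div_add_atTop_nhds_zero_nat
  have := ge_of_tendsto' lim bound
  simpa [mul_assoc] using this

lemma exp_quad_s11 (t a : ℝ) (ht : 0 ≤ t) (hta : t ≤ a) (ha : 0 < a) :
    Real.exp t - 1 - t ≤ (Real.exp a - a - 1) / a ^ 2 * t ^ 2 := by
  have hs : ∀ s : ℝ, HasSum (fun n : ℕ => s ^ (n+2) / ((n+2).factorial : ℝ))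
      (Real.exp s - 1 - s) := by
    intro s
    have h := NormedSpace.expSeries_div_hasSum_exp (𝔸 := ℝ) s
    rw [← Real.exp_eq_exp_ℝ] at h
    have := (hasSum_nat_add_iff' 2).2 h
    simpa [Finset.sum_range_succ, sub_sub] using this
  have h2 := (hs a).mul_right ((t / a) ^ 2)
  have := hasSum_le (fun n => ?_) (hs t) h2
  · refine this.trans (le_of_eq ?_)
    rw [div_pow]; ring
  · have h3 : t ^ n ≤ a ^ n := by gcongr
    have e : a ^ (n+2) / ((n+2).factorial : ℝ) * (t / a) ^ 2 = a ^ n * t ^ 2 / ((n+2).factorial : ℝ) := by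
      field_simp
      ring
    rw [e, pow_add]
    gcongr

lemma kp_bound (p t : ℝ) (hp1 : 1 < p) (ht : 0 ≤ t) : t - 1 ≤ Kp p * t ^ p := by
  have hp0 : 0 < p - 1 := by linarith
  have hp : 0 < p := by linarith
  set q := (p - 1) / p with hq
  have hq0 : 0 < q := by positivity
  have hb := one_add_mul_self_le_rpow_one_add (s := t * q - 1) (by nlinarith [mul_nonneg ht hq0.le]) hp1.le
  have e : 1 + (t * q - 1) = t * q := by ring
  rw [e, Real.mul_rpow ht hq0.le] at hb
  have e2 : q ^ p = q ^ (p - 1) * q := by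
    rw [← Real.rpow_add_one hq0.ne']; ring_nf
  have e3 : Kp p * t ^ p = (t ^ p * q ^ p) / (p - 1) := by
    rw [e2, Kp, ← hq]
    have : q / (p - 1) = 1 / p := by rw [hq]; field_simp
    rw [← this]; ring
  rw [e3, le_div_iff₀ hp0]
  have : p * (t * q - 1) = t * (p - 1) - p := by rw [hq]; field_simp
  linarith

lemma ville {Ω : Type*} {mΩ : MeasurableSpace Ω} {P : Measure Ω} [IsProbabilityMeasure P]
    (𝒢 : Filtration ℕ mΩ) (N : ℕ → Ω → ℝ) (h0 : ∀ n ω, 0 ≤ N n ω)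
    (hi : ∀ n, Integrable (N n) P) (hm : ∀ n, StronglyMeasurable[𝒢 n] (N n))
    (h1 : ∫ ω, N 0 ω ∂P ≤ 1)
    (hs : ∀ n A, MeasurableSet[𝒢 n] A → ∫ ω in A, N (n+1) ω ∂P ≤ ∫ ω in A, N n ω ∂P)
    (c : ℝ) (hc : 0 < c) : P {ω | ∃ n, c ≤ N n ω} ≤ ENNReal.ofReal (1 / c) := by
  let E : ℕ → Set Ω := fun n => {ω | ∃ k ≤ n, c ≤ N k ω}
  have hE : ∀ n, MeasurableSet[𝒢 n] (E n) := by
    intro n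
    have : E n = ⋃ k ∈ Finset.range (n+1), {ω | c ≤ N k ω} := by
      ext ω; simp [E]
    rw [this]
    refine Finset.measurableSet_biUnion _ (fun k hk => ?_)
    have hk' : k ≤ n := by simpa [Nat.lt_succ_iff] using hk
    exact ((hm k).mono (𝒢.mono hk')).measurable measurableSet_Ici
  have hE' : ∀ n, MeasurableSet (E n) := fun n => 𝒢.le n _ (hE n)
  have hN' : ∀ n, MeasurableSet[𝒢 n] {ω | c ≤ N n ω} := fun n => (hm n).measurable measurableSet_Ici
  have markov : ∀ n A, MeasurableSet A → A ⊆ {ω | c ≤ N n ω} → c * P.real A ≤ ∫ ω in A, N n ω ∂P := by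
    intro n A hA hsub
    have := setIntegral_mono_on (μ := P) (s := A) (f := fun _ => c) (g := N n)
      (by simp) (hi n).integrableOn hA (fun x hx => hsub hx)
    simpa [mul_comm] using this
  have claim : ∀ n, c * P.real (E n) + ∫ ω in (E n)ᶜ, N n ω ∂P ≤ 1 := by
    intro n
    induction n with
    | zero =>
      have hz : E 0 ⊆ {ω | c ≤ N 0 ω} := by intro ω hω; simpa [E] using hω
      have := markov 0 (E 0) (hE' 0) hz
      have h2 := integral_add_compl (hE' 0) (hi 0)
      linarith
    | succ n ih =>
      have h2 := hs n (E n)ᶜ (hE n).compl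
      have hsub : E n ⊆ E (n+1) := by
        rintro ω ⟨k, hk, h⟩; exact ⟨k, by omega, h⟩
      have hd : E (n+1) \ E n ⊆ {ω | c ≤ N (n+1) ω} := by
        rintro ω ⟨⟨k, hk, h⟩, hn⟩
        rcases Nat.lt_or_ge n k with h3 | h3
        · have : k = n + 1 := by omega
          subst this; exact h
        · exact absurd ⟨k, h3, h⟩ hn
      have h3 := markov (n+1) (E (n+1) \ E n) ((hE' _).diff (hE' _)) hd
      have h4 : P.real (E (n+1)) = P.real (E n) + P.real (E (n+1) \ E n) := by
        rw [measureReal_sdiff hsub (hE' n)]; ring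
      have h5 : ∫ ω in (E n)ᶜ, N (n+1) ω ∂P = ∫ ω in E (n+1) \ E n, N (n+1) ω ∂P +
          ∫ ω in (E (n+1))ᶜ, N (n+1) ω ∂P := by
        rw [← setIntegral_union _ (hE' _).compl (hi _).integrableOn (hi _).integrableOn]
        · congr 2
          ext ω
          simp only [Set.mem_compl_iff, Set.mem_union, Set.mem_sdiff]
          have := @hsub ω
          tauto
        · rw [Set.disjoint_left]
          intro ω h h'
          exact h' h.1
      rw [h4]
      linarith
  have hb : ∀ n, P (E n) ≤ ENNReal.ofReal (1 / c) := by
    intro n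
    have h2 : 0 ≤ ∫ ω in (E n)ᶜ, N n ω ∂P := integral_nonneg (h0 n)
    have h3 := claim n
    rw [← ofReal_measureReal]
    apply ENNReal.ofReal_le_ofReal
    rw [le_div_iff₀ hc]; linarith
  have hU : {ω | ∃ n, c ≤ N n ω} = ⋃ n, E n := by
    ext ω
    simp only [Set.mem_ofPred_eq, Set.mem_iUnion, E]
    exact ⟨fun ⟨n, h⟩ => ⟨n, n, le_rfl, h⟩, fun ⟨_, k, _, h⟩ => ⟨k, h⟩⟩
  have hmono : Monotone E := by
    rintro a b hab ω ⟨k, hk, h⟩; exact ⟨k, hk.trans hab, h⟩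
  rw [hU, hmono.measure_iUnion]
  exact iSup_le hb

lemma integrable_bdd {Ω : Type*} {mΩ : MeasurableSpace Ω} {P : Measure Ω} [IsProbabilityMeasure P]
    {B : Type*} [NormedAddCommGroup B]
    (f : Ω → B) (hf : AEStronglyMeasurable f P) (g : B → ℝ) (hg : Continuous g) (C K : ℝ)
    (hb : ∀ᵐ ω ∂P, ‖f ω‖ ≤ C) (hgK : ∀ x, ‖x‖ ≤ C → |g x| ≤ K) :
    Integrable (fun ω => g (f ω)) P := by
  refine Integrable.of_bound (hg.comp_aestronglyMeasurable hf) K ?_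
  filter_upwards [hb] with ω h using hgK _ h

lemma step_simple {B : Type*} [NormedAddCommGroup B] [NormedSpace ℝ B] [CompleteSpace B]
    {Ω : Type*} (m : MeasurableSpace Ω) {mΩ : MeasurableSpace Ω} {P : Measure Ω} [IsProbabilityMeasure P]
    (β : ℝ) (hβ : 1 ≤ β)
    (hsmooth : ∀ x y : B, ‖x + y‖ ^ 2 + ‖x - y‖ ^ 2 ≤ 2 * ‖x‖ ^ 2 + 2 * β ^ 2 * ‖y‖ ^ 2)
    (hm : m ≤ mΩ) (D : Ω → B) (hD : AEStronglyMeasurable D P) (C : ℝ)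
    (hDC : ∀ᵐ ω ∂P, ‖D ω‖ ≤ C) (hD0 : ∀ A, MeasurableSet[m] A → ∫ ω in A, D ω ∂P = 0)
    (κ : ℝ)
    (hκ : ∀ A, MeasurableSet[m] A →
      ∫ ω in A, (Real.exp ‖D ω‖ - 1 - ‖D ω‖) ∂P ≤ κ * P.real A)
    (S : @SimpleFunc Ω m B) (A : Set Ω) (hA : MeasurableSet[m] A) :
    ∫ ω in A, Real.cosh ‖S ω + D ω‖ ∂P ≤ (1 + β ^ 2 * κ) * ∫ ω in A, Real.cosh ‖S ω‖ ∂P := by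
  have iD : Integrable D P := Integrable.of_bound hD C hDC
  have iG : Integrable (fun ω => Real.exp ‖D ω‖ - 1 - ‖D ω‖) P := by
    refine (Integrable.sub (Integrable.sub ?_ (integrable_const _)) iD.norm)
    refine integrable_bdd D hD (fun x => Real.exp ‖x‖) (by fun_prop) C (Real.exp C) hDC ?_
    intro x hx
    rw [Real.abs_exp]; exact Real.exp_le_exp.2 hx
  have iC : ∀ x : B, Integrable (fun ω => Real.cosh ‖x + D ω‖) P := by
    intro x
    refine integrable_bdd D hD (fun y => Real.cosh ‖x + y‖) (by fun_prop) C
      (Real.cosh (‖x‖ + C)) hDC ?_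
    intro y hy
    rw [abs_of_pos (Real.cosh_pos _), Real.cosh_le_cosh, abs_of_nonneg (norm_nonneg _)]
    exact ((norm_add_le _ _).trans (by linarith)).trans (le_abs_self _)
  have const : ∀ x A, MeasurableSet[m] A →
      ∫ ω in A, Real.cosh ‖x + D ω‖ ∂P ≤ (1 + β ^ 2 * κ) * (P.real A * Real.cosh ‖x‖) := by
    intro x A hA
    obtain ⟨l, hl⟩ := cosh_taylor β hβ hsmooth x
    have i1 : IntegrableOn (fun ω => l (D ω)) A P := (l.integrable_comp iD).integrableOn
    have h1 : ∫ ω in A, Real.cosh ‖x + D ω‖ ∂P ≤ ∫ ω in A, (Real.cosh ‖x‖ + l (D ω)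
      + Real.cosh ‖x‖ * β ^ 2 * (Real.exp ‖D ω‖ - 1 - ‖D ω‖)) ∂P := by
      refine integral_mono (iC x).integrableOn ?_ (fun ω => hl (D ω))
      exact ((integrable_const _).add i1).add ((iG.integrableOn).const_mul _)
    have i2 : IntegrableOn (fun ω => Real.cosh ‖x‖ + l (D ω)) A P := (integrable_const _).add i1
    rw [integral_add i2 ((iG.integrableOn).const_mul _),
      integral_add (integrable_const _) i1, l.integral_comp_comm iD.integrableOn, hD0 A hA,
      integral_const_mul, map_zero, setIntegral_const, smul_eq_mul] at h1
    have h2 := mul_le_mul_of_nonneg_left (hκ A hA)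
      (show 0 ≤ Real.cosh ‖x‖ * β ^ 2 by have := Real.cosh_pos ‖x‖; positivity)
    linarith
  have hmeas : ∀ x, MeasurableSet (A ∩ S ⁻¹' {x}) := fun x =>
    hm _ (hA.inter (@SimpleFunc.measurableSet_fiber _ _ m S x))
  obtain ⟨F, hF⟩ : ∃ F : Finset B, ∀ ω, S ω ∈ F :=
    ⟨@SimpleFunc.range _ _ m S, fun ω => @SimpleFunc.mem_range_self _ _ m S ω⟩
  have hU : A = ⋃ x ∈ F, A ∩ S ⁻¹' {x} := by
    ext ω; simp [hF]
  have hdisj : (F : Set B).Pairwise (Function.onFun Disjoint fun x => A ∩ S ⁻¹' {x}) := by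
    intro x _ y _ hxy
    rw [Function.onFun, Set.disjoint_left]
    rintro ω ⟨_, h1⟩ ⟨_, h2⟩
    simp only [Set.mem_preimage, Set.mem_singleton_iff] at h1 h2
    exact hxy (h1.symm.trans h2)
  have hcongr : ∀ (g : B → B → ℝ) (x : B), Set.EqOn (fun ω => g x (D ω)) (fun ω => g (S ω) (D ω))
      (A ∩ S ⁻¹' {x}) := by
    rintro g x ω ⟨_, h⟩
    simp only [Set.mem_preimage, Set.mem_singleton_iff] at h
    simp [h]
  rw [hU, integral_biUnion_finset _ (fun x _ => hmeas x) hdisj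
      (fun x _ => ((iC x).integrableOn).congr_fun (hcongr (fun x y => Real.cosh ‖x + y‖) x) (hmeas x)),
    integral_biUnion_finset _ (fun x _ => hmeas x) hdisj
      (fun x _ => ((integrable_const (Real.cosh ‖x‖)).integrableOn).congr_fun
        (hcongr (fun x y => Real.cosh ‖x‖) x) (hmeas x)), Finset.mul_sum]
  refine Finset.sum_le_sum (fun x _ => ?_)
  rw [← setIntegral_congr_fun (hmeas x) (hcongr (fun x y => Real.cosh ‖x + y‖) x),
    ← setIntegral_congr_fun (hmeas x) (hcongr (fun x y => Real.cosh ‖x‖) x), setIntegral_const,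
    smul_eq_mul]
  exact const x _ (hA.inter (@SimpleFunc.measurableSet_fiber _ _ m S x))

lemma step_s11 {B : Type*} [NormedAddCommGroup B] [NormedSpace ℝ B] [CompleteSpace B]
    {Ω : Type*} (m : MeasurableSpace Ω) {mΩ : MeasurableSpace Ω} {P : Measure Ω} [IsProbabilityMeasure P]
    (β : ℝ) (hβ : 1 ≤ β)
    (hsmooth : ∀ x y : B, ‖x + y‖ ^ 2 + ‖x - y‖ ^ 2 ≤ 2 * ‖x‖ ^ 2 + 2 * β ^ 2 * ‖y‖ ^ 2)
    (hm : m ≤ mΩ) (D : Ω → B) (hD : AEStronglyMeasurable D P) (C : ℝ)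
    (hDC : ∀ᵐ ω ∂P, ‖D ω‖ ≤ C) (hD0 : ∀ A, MeasurableSet[m] A → ∫ ω in A, D ω ∂P = 0)
    (κ : ℝ)
    (hκ : ∀ A, MeasurableSet[m] A →
      ∫ ω in A, (Real.exp ‖D ω‖ - 1 - ‖D ω‖) ∂P ≤ κ * P.real A)
    (S : Ω → B) (hS : StronglyMeasurable[m] S) (C' : ℝ) (hC' : 0 ≤ C') (hSC : ∀ᵐ ω ∂P, ‖S ω‖ ≤ C')
    (A : Set Ω) (hA : MeasurableSet[m] A) :
    ∫ ω in A, Real.cosh ‖S ω + D ω‖ ∂P ≤ (1 + β ^ 2 * κ) * ∫ ω in A, Real.cosh ‖S ω‖ ∂P := by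
  have hlim := hS.tendsto_approxBounded_ae hSC
  have hfm : ∀ n, AEStronglyMeasurable (fun ω => hS.approxBounded C' n ω) P := fun n =>
    ((SimpleFunc.stronglyMeasurable (hS.approxBounded C' n)).mono hm).aestronglyMeasurable
  have L1 : Filter.Tendsto (fun n => ∫ ω in A, Real.cosh ‖hS.approxBounded C' n ω + D ω‖ ∂P)
      Filter.atTop (nhds (∫ ω in A, Real.cosh ‖S ω + D ω‖ ∂P)) := by
    refine tendsto_integral_of_dominated_convergence (fun _ => Real.cosh (C' + C)) (fun n => ?_)
      (integrable_const _) (fun n => ?_) ?_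
    · have hc : Continuous (fun x : B => Real.cosh ‖x‖) := by fun_prop
      exact (hc.comp_aestronglyMeasurable ((hfm n).add hD)).restrict
    · filter_upwards [ae_restrict_of_ae hDC] with ω h
      rw [Real.norm_eq_abs, abs_of_pos (Real.cosh_pos _), Real.cosh_le_cosh, abs_of_nonneg (norm_nonneg _)]
      have := hS.norm_approxBounded_le hC' n ω
      exact ((norm_add_le _ _).trans (by linarith)).trans (le_abs_self _)
    · filter_upwards [ae_restrict_of_ae hlim] with ω h
      have hc : Continuous (fun x : B => Real.cosh ‖x + D ω‖) := by fun_prop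
      exact (hc.tendsto _).comp h
  have L2 : Filter.Tendsto (fun n => ∫ ω in A, Real.cosh ‖hS.approxBounded C' n ω‖ ∂P)
      Filter.atTop (nhds (∫ ω in A, Real.cosh ‖S ω‖ ∂P)) := by
    refine tendsto_integral_of_dominated_convergence (fun _ => Real.cosh C') (fun n => ?_)
      (integrable_const _) (fun n => ?_) ?_
    · have hc : Continuous (fun x : B => Real.cosh ‖x‖) := by fun_prop
      exact (hc.comp_aestronglyMeasurable (hfm n)).restrict
    · filter_upwards with ω
      rw [Real.norm_eq_abs, abs_of_pos (Real.cosh_pos _), Real.cosh_le_cosh, abs_of_nonneg (norm_nonneg _)]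
      exact (hS.norm_approxBounded_le hC' n ω).trans (le_abs_self _)
    · filter_upwards [ae_restrict_of_ae hlim] with ω h
      have hc : Continuous (fun x : B => Real.cosh ‖x‖) := by fun_prop
      exact (hc.tendsto _).comp h
  exact le_of_tendsto_of_tendsto' L1 (L2.const_mul _)
    (fun n => step_simple m β hβ hsmooth hm D hD C hDC hD0 κ hκ _ A hA)

lemma truncB_smul {B : Type*} [NormedAddCommGroup B] [NormedSpace ℝ B] (x : B) :
    truncB x • x = (max 1 ‖x‖)⁻¹ • x := by
  unfold truncB
  split_ifs with h
  · simp [h]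
  · have hx : 0 < ‖x‖ := norm_pos_iff.2 h
    congr 1
    rcases le_total 1 ‖x‖ with h1 | h1
    · rw [min_eq_left h1, max_eq_right h1, one_div]
    · rw [min_eq_right h1, max_eq_left h1, div_self hx.ne', inv_one]

lemma truncB_norm_le {B : Type*} [NormedAddCommGroup B] [NormedSpace ℝ B] (x : B) :
    ‖truncB x • x‖ ≤ 1 := by
  have h : 0 < max 1 ‖x‖ := by positivity
  rw [truncB_smul, norm_smul, Real.norm_of_nonneg (by positivity), inv_mul_le_iff₀ h]
  simp

lemma truncB_norm_le' {B : Type*} [NormedAddCommGroup B] [NormedSpace ℝ B] (x : B) :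
    ‖truncB x • x‖ ≤ ‖x‖ := by
  have h : 0 < max 1 ‖x‖ := by positivity
  rw [truncB_smul, norm_smul, Real.norm_of_nonneg (by positivity), inv_mul_le_iff₀ h]
  nlinarith [le_max_left 1 ‖x‖, norm_nonneg x]

lemma truncB_cont {B : Type*} [NormedAddCommGroup B] [NormedSpace ℝ B] :
    Continuous (fun x : B => truncB x • x) := by
  simp_rw [truncB_smul]
  refine Continuous.smul (Continuous.inv₀ (by fun_prop) (fun x => ?_)) continuous_id
  positivity

lemma truncB_err {B : Type*} [NormedAddCommGroup B] [NormedSpace ℝ B] (p : ℝ) (hp1 : 1 < p) (x : B) :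
    ‖truncB x • x - x‖ ≤ Kp p * ‖x‖ ^ p := by
  have hK : 0 ≤ Kp p := by
    unfold Kp
    have : 0 < p - 1 := by linarith
    have : 0 < p := by linarith
    positivity
  rw [truncB_smul]
  rcases le_total 1 ‖x‖ with h1 | h1
  · have e : (max 1 ‖x‖)⁻¹ • x - x = (‖x‖⁻¹ - 1) • x := by
      rw [max_eq_right h1, sub_smul, one_smul]
    have hx : 0 < ‖x‖ := by linarith
    rw [e, norm_smul, Real.norm_of_nonpos (by have := inv_le_one_of_one_le₀ h1; linarith)]
    refine le_trans (le_of_eq ?_) (kp_bound p ‖x‖ hp1 hx.le)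
    field_simp
    ring
  · rw [max_eq_left h1]
    simp
    positivity

lemma rpow_add_le (p a b : ℝ) (hp1 : 1 ≤ p) (ha : 0 ≤ a) (hb : 0 ≤ b) :
    (a + b) ^ p ≤ 2 ^ (p - 1) * (a ^ p + b ^ p) := by
  have := NNReal.rpow_add_le_mul_rpow_add_rpow ⟨a, ha⟩ ⟨b, hb⟩ hp1
  exact_mod_cast this

lemma one_step {B : Type*} [NormedAddCommGroup B] [NormedSpace ℝ B] [CompleteSpace B]
    {Ω : Type*} (m : MeasurableSpace Ω) {mΩ : MeasurableSpace Ω} {P : Measure Ω}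
    [IsProbabilityMeasure P] (hm : m ≤ mΩ) (X : Ω → B) (μ : B) (p v : ℝ)
    (hp1 : 1 < p) (hp2 : p ≤ 2)
    (hint : Integrable X P) (hmom : Integrable (fun ω => ‖X ω‖ ^ p) P)
    (hcondmean : P[X | m] =ᵐ[P] fun _ => μ)
    (hcondmom : ∀ᵐ ω ∂P, (P[fun ω' => ‖X ω' - μ‖ ^ p | m]) ω ≤ v)
    (Z : Ω → B) (hZ : StronglyMeasurable[m] Z) (R : ℝ) (hZR : ∀ ω, ‖μ - Z ω‖ ≤ R)
    (ρ lam : ℝ) (hρ : 0 < ρ) (hlam : 0 < lam) (T : Ω → B)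
    (hT : T = fun ω => truncB (lam • (X ω - Z ω)) • (lam • (X ω - Z ω))) :
    (∀ᵐ ω ∂P, ‖(P[T | m]) ω‖ ≤ 1) ∧
    (∀ᵐ ω ∂P, ‖(P[T | m]) ω - lam • (μ - Z ω)‖ ≤ lam ^ p * (Kp p * 2 ^ (p - 1)) * (v + R ^ p)) ∧
    (∀ A, MeasurableSet[m] A → ∫ ω in A, ρ • (T ω - (P[T | m]) ω) ∂P = 0) ∧
    (∀ A, MeasurableSet[m] A →
      ∫ ω in A, (Real.exp ‖ρ • (T ω - (P[T | m]) ω)‖ - 1 - ‖ρ • (T ω - (P[T | m]) ω)‖) ∂P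
        ≤ (ρ ^ 2 * frakC p ρ * lam ^ p * (v + R ^ p)) * P.real A) := by
  have hp0 : 0 < p := by linarith
  have hZm : AEStronglyMeasurable Z P := (hZ.mono hm).aestronglyMeasurable
  have iZ : Integrable Z P := by
    refine Integrable.of_bound hZm (‖μ‖ + R) (Filter.Eventually.of_forall fun ω => ?_)
    have := norm_sub_norm_le (Z ω) μ
    rw [norm_sub_rev] at this
    linarith [hZR ω]
  have iW : Integrable (fun ω => X ω - Z ω) P := hint.sub iZ
  have hTm : AEStronglyMeasurable T P := by
    rw [hT]
    exact truncB_cont.comp_aestronglyMeasurable (iW.aestronglyMeasurable.const_smul lam)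
  have hT1 : ∀ ω, ‖T ω‖ ≤ 1 := by intro ω; rw [hT]; exact truncB_norm_le _
  have hTW : ∀ ω, ‖T ω‖ ≤ lam * ‖X ω - Z ω‖ := by
    intro ω; rw [hT]
    refine (truncB_norm_le' _).trans (le_of_eq ?_)
    rw [norm_smul, Real.norm_of_nonneg hlam.le]
  have iT : Integrable T P := Integrable.of_bound hTm 1 (Filter.Eventually.of_forall hT1)
  -- moments
  have rc : Continuous (fun t : ℝ => t ^ p) := Real.continuous_rpow_const hp0.le
  have iXμ : Integrable (fun ω => ‖X ω - μ‖ ^ p) P := by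
    have i1 : Integrable (fun ω => 2 ^ (p - 1) * (‖X ω‖ ^ p + ‖μ‖ ^ p)) P :=
      (hmom.add (integrable_const _)).const_mul _
    refine i1.mono' (rc.comp_aestronglyMeasurable
      (hint.sub (integrable_const μ)).aestronglyMeasurable.norm) ?_
    filter_upwards with ω
    rw [Real.norm_of_nonneg (by positivity)]
    refine le_trans ?_ (rpow_add_le p _ _ hp1.le (norm_nonneg _) (norm_nonneg _))
    gcongr
    exact norm_sub_le _ _
  have hWle : ∀ ω, ‖X ω - Z ω‖ ^ p ≤ 2 ^ (p - 1) * (‖X ω - μ‖ ^ p + R ^ p) := by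
    intro ω
    refine le_trans ?_ (rpow_add_le p _ _ hp1.le (norm_nonneg _) ((norm_nonneg _).trans (hZR ω)))
    gcongr
    have : X ω - Z ω = (X ω - μ) + (μ - Z ω) := by abel
    rw [this]
    exact (norm_add_le _ _).trans (by linarith [hZR ω])
  have iR : Integrable (fun ω => ‖X ω - μ‖ ^ p + R ^ p) P := iXμ.add (integrable_const _)
  have iR2 : Integrable (fun ω => (2:ℝ) ^ (p - 1) * (‖X ω - μ‖ ^ p + R ^ p)) P := iR.const_mul _
  have iWp : Integrable (fun ω => ‖X ω - Z ω‖ ^ p) P := by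
    refine iR2.mono' (rc.comp_aestronglyMeasurable iW.aestronglyMeasurable.norm) ?_
    filter_upwards with ω
    rw [Real.norm_of_nonneg (by positivity)]
    exact hWle ω
  have hWcond : ∀ᵐ ω ∂P, (P[fun ω' => ‖X ω' - Z ω'‖ ^ p | m]) ω ≤ 2 ^ (p - 1) * (v + R ^ p) := by
    have h1 := condExp_mono (m := m) iWp iR2 (Filter.Eventually.of_forall hWle)
    have h2 := condExp_smul (μ := P) ((2:ℝ) ^ (p - 1)) (fun ω => ‖X ω - μ‖ ^ p + R ^ p) m
    have h3 := condExp_add (μ := P) iXμ (integrable_const (R ^ p)) m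
    have h4 := condExp_const (μ := P) hm (R ^ p)
    have e2 : (2:ℝ) ^ (p - 1) • (fun ω => ‖X ω - μ‖ ^ p + R ^ p)
      = fun ω => (2:ℝ) ^ (p - 1) * (‖X ω - μ‖ ^ p + R ^ p) := rfl
    have e3 : (fun ω => ‖X ω - μ‖ ^ p) + (fun _ => R ^ p) = fun ω => ‖X ω - μ‖ ^ p + R ^ p := rfl
    rw [e2] at h2
    rw [e3] at h3
    filter_upwards [h1, h2, h3, hcondmom] with ω h1 h2 h3 h5
    rw [h2] at h1
    simp only [Pi.smul_apply, smul_eq_mul] at h1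
    rw [h3, Pi.add_apply, h4] at h1
    refine h1.trans ?_
    gcongr
  have hK : 0 ≤ Kp p := by
    unfold Kp
    have : 0 < p - 1 := by linarith
    positivity
  refine ⟨?_, ?_, ?_, ?_⟩
  · have h1 := condExp_mono (μ := P) (m := m) iT.norm (integrable_const (1:ℝ))
      (Filter.Eventually.of_forall hT1)
    have h4 := condExp_const (μ := P) hm (1:ℝ)
    filter_upwards [norm_condExp_le (μ := P) (m := m) T, h1] with ω h2 h3
    rw [h4] at h3
    exact h2.trans h3
  · have iF : Integrable (fun ω => T ω - lam • (X ω - Z ω)) P := iT.sub (iW.smul lam)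
    have h1 := condExp_sub (μ := P) iT (iW.smul lam) m
    have h2 := condExp_smul (μ := P) lam (fun ω => X ω - Z ω) m
    have h3 := condExp_sub (μ := P) hint iZ m
    have h4 := condExp_of_stronglyMeasurable (μ := P) hm hZ iZ
    have i5 : Integrable (fun ω => (Kp p * lam ^ p) * ‖X ω - Z ω‖ ^ p) P := iWp.const_mul _
    have h5 := condExp_mono (μ := P) (m := m) iF.norm i5 (Filter.Eventually.of_forall (fun ω => by
      have := truncB_err p hp1 (lam • (X ω - Z ω))
      rw [norm_smul, Real.norm_of_nonneg hlam.le, Real.mul_rpow hlam.le (norm_nonneg _)] at this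
      simp only [hT]
      linarith))
    have h6 := condExp_smul (μ := P) (Kp p * lam ^ p) (fun ω => ‖X ω - Z ω‖ ^ p) m
    have h7 := norm_condExp_le (μ := P) (m := m) (fun ω => T ω - lam • (X ω - Z ω))
    have e1 : (T - lam • fun ω => X ω - Z ω) = fun ω => T ω - lam • (X ω - Z ω) := rfl
    have e3 : X - Z = fun ω => X ω - Z ω := rfl
    have e6 : (Kp p * lam ^ p) • (fun ω => ‖X ω - Z ω‖ ^ p)
      = fun ω => (Kp p * lam ^ p) * ‖X ω - Z ω‖ ^ p := rfl
    rw [e1] at h1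
    rw [e3] at h3
    rw [e6] at h6
    filter_upwards [h1, h2, h3, h5, h6, h7, hWcond, hcondmean] with ω h1 h2 h3 h5 h6 h7 h8 h9
    simp only [Pi.sub_apply, Pi.smul_apply] at h1 h2 h3 h6
    rw [h1, h2, h3, h4, h9] at h7
    rw [h6, smul_eq_mul] at h5
    refine h7.trans (h5.trans ?_)
    calc _ ≤ (Kp p * lam ^ p) * (2 ^ (p - 1) * (v + R ^ p)) := by gcongr
      _ = _ := by ring
  · intro A hA
    rw [integral_smul, integral_sub iT.integrableOn integrable_condExp.integrableOn,
      setIntegral_condExp hm iT hA, sub_self, smul_zero]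
  · intro A hA
    have iTp : Integrable (fun ω => ‖T ω‖ ^ p) P := by
      refine Integrable.of_bound (rc.comp_aestronglyMeasurable hTm.norm) 1
        (Filter.Eventually.of_forall fun ω => ?_)
      rw [Real.norm_of_nonneg (by positivity)]
      exact Real.rpow_le_one (norm_nonneg _) (hT1 ω) hp0.le
    set q := (Real.exp (2 * ρ) - 2 * ρ - 1) / (2 * ρ) ^ 2 with hq
    have hq0 : 0 ≤ q := by
      have := Real.add_one_le_exp (2 * ρ)
      exact div_nonneg (by linarith) (by positivity)
    have he1 : ∀ᵐ ω ∂P, ‖(P[T | m]) ω‖ ≤ 1 := by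
      have h1 := condExp_mono (μ := P) (m := m) iT.norm (integrable_const (1:ℝ))
        (Filter.Eventually.of_forall hT1)
      have h4 := condExp_const (μ := P) hm (1:ℝ)
      filter_upwards [norm_condExp_le (μ := P) (m := m) T, h1] with ω h2 h3
      rw [h4] at h3
      exact h2.trans h3
    have hpt : ∀ᵐ ω ∂P, Real.exp ‖ρ • (T ω - (P[T | m]) ω)‖ - 1 - ‖ρ • (T ω - (P[T | m]) ω)‖ ≤
        (q * ρ ^ 2 * 2) * (‖T ω‖ ^ p + (P[fun ω => ‖T ω‖ ^ p | m]) ω) := by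
      filter_upwards [he1, Integrable.norm_condExp_rpow_le (μ := P) (m := m) hp1.le iTp] with ω h1 h2
      set d := ‖T ω - (P[T | m]) ω‖ with hd
      have hd0 : 0 ≤ d := norm_nonneg _
      have hd1 : d ≤ ‖T ω‖ + ‖(P[T | m]) ω‖ := norm_sub_le _ _
      have hd2 : d ≤ 2 := by linarith [hT1 ω]
      rw [norm_smul, Real.norm_of_nonneg hρ.le, ← hd]
      have h3 := exp_quad_s11 (ρ * d) (2 * ρ) (by positivity) (by nlinarith) (by positivity)
      rw [← hq] at h3
      have h4 : d ^ 2 ≤ 2 ^ (2 - p) * d ^ p := by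
        have : d ^ 2 = d ^ (2 - p) * d ^ p := by
          rcases hd0.eq_or_lt with h | h
          · rw [← h, Real.zero_rpow hp0.ne']; simp
          · rw [← Real.rpow_add h]; norm_num
        rw [this]
        gcongr
      have h5 : d ^ p ≤ 2 ^ (p - 1) * (‖T ω‖ ^ p + ‖(P[T | m]) ω‖ ^ p) := by
        refine le_trans ?_ (rpow_add_le p _ _ hp1.le (norm_nonneg _) (norm_nonneg _))
        gcongr
      have e : (2:ℝ) ^ (2 - p) * 2 ^ (p - 1) = 2 := by
        rw [← Real.rpow_add two_pos]; norm_num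
      calc _ ≤ q * (ρ * d) ^ 2 := h3
        _ = q * ρ ^ 2 * d ^ 2 := by ring
        _ ≤ q * ρ ^ 2 * (2 ^ (2 - p) * (2 ^ (p - 1) * (‖T ω‖ ^ p + (P[fun ω => ‖T ω‖ ^ p | m]) ω))) := by
          gcongr
          refine h4.trans ?_
          gcongr
          refine h5.trans ?_
          gcongr
        _ = (q * ρ ^ 2 * (2 ^ (2 - p) * 2 ^ (p - 1))) * (‖T ω‖ ^ p + (P[fun ω => ‖T ω‖ ^ p | m]) ω) := by
          ring
        _ = _ := by rw [e]
    have iS : Integrable (fun ω => ‖T ω‖ ^ p + (P[fun ω => ‖T ω‖ ^ p | m]) ω) P :=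
      iTp.add integrable_condExp
    have step1 : ∫ ω in A, (Real.exp ‖ρ • (T ω - (P[T | m]) ω)‖ - 1 - ‖ρ • (T ω - (P[T | m]) ω)‖) ∂P
        ≤ ∫ ω in A, (q * ρ ^ 2 * 2) * (‖T ω‖ ^ p + (P[fun ω => ‖T ω‖ ^ p | m]) ω) ∂P := by
      refine integral_mono_of_nonneg (Filter.Eventually.of_forall fun ω => ?_)
        (iS.integrableOn.const_mul _) (ae_restrict_of_ae hpt)
      have := Real.add_one_le_exp ‖ρ • (T ω - (P[T | m]) ω)‖
      simp only [Pi.zero_apply]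
      linarith
    rw [integral_const_mul, integral_add iTp.integrableOn integrable_condExp.integrableOn,
      setIntegral_condExp hm iTp hA] at step1
    have step2 : ∫ ω in A, ‖T ω‖ ^ p ∂P ≤ lam ^ p * ∫ ω in A, ‖X ω - Z ω‖ ^ p ∂P := by
      rw [← integral_const_mul]
      refine integral_mono iTp.integrableOn (iWp.integrableOn.const_mul _) (fun ω => ?_)
      simp only
      rw [← Real.mul_rpow hlam.le (norm_nonneg _)]
      exact Real.rpow_le_rpow (norm_nonneg _) (hTW ω) hp0.le
    have step3 : ∫ ω in A, ‖X ω - Z ω‖ ^ p ∂P ≤ (2 ^ (p - 1) * (v + R ^ p)) * P.real A := by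
      rw [← setIntegral_condExp hm iWp hA]
      refine (integral_mono_ae integrable_condExp.integrableOn
        (integrable_const (2 ^ (p - 1) * (v + R ^ p))) (ae_restrict_of_ae hWcond)).trans ?_
      rw [setIntegral_const, smul_eq_mul, mul_comm]
    have e4 : (2:ℝ) ^ (p + 1) = 4 * 2 ^ (p - 1) := by
      have : p + 1 = (p - 1) + 2 := by ring
      rw [this, Real.rpow_add two_pos]; norm_num; ring
    have eF : frakC p ρ = 4 * 2 ^ (p - 1) * q := by
      unfold frakC; rw [e4, hq]; ring
    have hlp : 0 < lam ^ p := Real.rpow_pos_of_pos hlam p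
    refine step1.trans ?_
    calc _ = (q * ρ ^ 2 * 4) * ∫ ω in A, ‖T ω‖ ^ p ∂P := by ring
      _ ≤ (q * ρ ^ 2 * 4) * (lam ^ p * ((2 ^ (p - 1) * (v + R ^ p)) * P.real A)) := by
        gcongr
        refine step2.trans ?_
        gcongr
      _ = _ := by rw [eF]; ring

lemma core {B : Type*} [NormedAddCommGroup B] [NormedSpace ℝ B] [CompleteSpace B]
    {Ω : Type*} {mΩ : MeasurableSpace Ω} {P : Measure Ω} [IsProbabilityMeasure P]
    (β : ℝ) (hβ : 1 ≤ β)
    (hsmooth : ∀ x y : B, ‖x + y‖ ^ 2 + ‖x - y‖ ^ 2 ≤ 2 * ‖x‖ ^ 2 + 2 * β ^ 2 * ‖y‖ ^ 2)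
    (𝒢 : Filtration ℕ mΩ) (X : ℕ → Ω → B) (μ : B) (p v : ℝ)
    (hp1 : 1 < p) (hp2 : p ≤ 2)
    (hadapted : ∀ n : ℕ, 1 ≤ n → StronglyMeasurable[𝒢 n] (X n))
    (hint : ∀ n : ℕ, 1 ≤ n → Integrable (X n) P)
    (hmom : ∀ n : ℕ, 1 ≤ n → Integrable (fun ω => ‖X n ω‖ ^ p) P)
    (hcondmean : ∀ n : ℕ, P[X (n + 1) | 𝒢 n] =ᵐ[P] fun _ => μ)
    (hcondmom : ∀ n : ℕ, ∀ᵐ ω ∂P, (P[fun ω' => ‖X (n + 1) ω' - μ‖ ^ p | 𝒢 n]) ω ≤ v)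
    (Z : Ω → B) (hZ : StronglyMeasurable[𝒢 0] Z) (R : ℝ) (hZR : ∀ ω, ‖μ - Z ω‖ ≤ R)
    (δ₁ : ℝ) (hδ₁ : 0 < δ₁)
    (ρ lam : ℝ) (hρ : 0 < ρ) (hlam : 0 < lam) :
    P {ω | ¬ ∀ n : ℕ, 1 ≤ n →
        ‖(n : ℝ)⁻¹ • (∑ m ∈ Finset.range n,
            (truncB (lam • (X (m + 1) ω - Z ω)) • (X (m + 1) ω - Z ω) + Z ω)) - μ‖ ≤
          lam ^ (p - 1) * (ρ * β ^ 2 * frakC p ρ + Kp p * 2 ^ (p - 1)) * (v + R ^ p)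
            + Real.log (2 / δ₁) / (lam * ρ * n)} ≤ ENNReal.ofReal δ₁ := by
  let T : ℕ → Ω → B := fun n ω =>
    truncB (lam • (X (n + 1) ω - Z ω)) • (lam • (X (n + 1) ω - Z ω))
  let e : ℕ → Ω → B := fun n => P[T n | 𝒢 n]
  let D : ℕ → Ω → B := fun n ω => ρ • (T n ω - e n ω)
  let S : ℕ → Ω → B := fun n ω => ∑ k ∈ Finset.range n, D k ω
  have H := fun n => one_step (P := P) (𝒢 n) (𝒢.le n) (X (n+1)) μ p v hp1 hp2 (hint _ (by omega))
    (hmom _ (by omega)) (hcondmean n) (hcondmom n) Z (hZ.mono (𝒢.mono (Nat.zero_le n))) R hZR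
    ρ lam hρ hlam (T n) rfl
  have hTm : ∀ n, StronglyMeasurable[𝒢 (n+1)] (T n) := fun n =>
    truncB_cont.comp_stronglyMeasurable
      (((hadapted (n+1) (by omega)).sub (hZ.mono (𝒢.mono (Nat.zero_le _)))).const_smul lam)
  have hem : ∀ n, StronglyMeasurable[𝒢 n] (e n) := fun n => stronglyMeasurable_condExp
  have hDm : ∀ n, StronglyMeasurable[𝒢 (n+1)] (D n) := fun n =>
    ((hTm n).sub ((hem n).mono (𝒢.mono (Nat.le_succ n)))).const_smul ρ
  have hSm : ∀ n, StronglyMeasurable[𝒢 n] (S n) := fun n =>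
    Finset.stronglyMeasurable_fun_sum _ (fun k hk =>
      (hDm k).mono (𝒢.mono (by have := Finset.mem_range.1 hk; omega)))
  have hDb : ∀ n, ∀ᵐ ω ∂P, ‖D n ω‖ ≤ ρ * 2 := by
    intro n
    filter_upwards [(H n).1] with ω h
    simp only [D, norm_smul, Real.norm_of_nonneg hρ.le]
    gcongr
    refine (norm_sub_le _ _).trans ?_
    have := truncB_norm_le (lam • (X (n + 1) ω - Z ω))
    simp only [T, e] at *
    linarith
  have hSb : ∀ n, ∀ᵐ ω ∂P, ‖S n ω‖ ≤ n * (ρ * 2) := by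
    intro n
    filter_upwards [ae_all_iff.2 hDb] with ω h
    refine (norm_sum_le _ _).trans ((Finset.sum_le_sum (fun k _ => h k)).trans ?_)
    simp
  set κ := ρ ^ 2 * frakC p ρ * lam ^ p * (v + R ^ p) with hκ
  set c := β ^ 2 * κ with hc
  let N : ℕ → Ω → ℝ := fun n ω => Real.exp (-(n * c)) * Real.cosh ‖S n ω‖
  have hcont : Continuous (fun x : B => Real.cosh ‖x‖) := by fun_prop
  have iC : ∀ n, Integrable (fun ω => Real.cosh ‖S n ω‖) P := by
    intro n
    refine integrable_bdd (S n) ((hSm n).mono (𝒢.le n)).aestronglyMeasurable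
      (fun x => Real.cosh ‖x‖) hcont (n * (ρ * 2)) (Real.cosh (n * (ρ * 2))) (hSb n) ?_
    intro x hx
    rw [abs_of_pos (Real.cosh_pos _), Real.cosh_le_cosh, abs_of_nonneg (norm_nonneg _)]
    exact hx.trans (le_abs_self _)
  have hV := ville (P := P) 𝒢 N
    (fun n ω => mul_nonneg (Real.exp_pos _).le (Real.cosh_pos _).le)
    (fun n => (iC n).const_mul _)
    (fun n => (hcont.comp_stronglyMeasurable (hSm n)).const_mul _)
    (by simp [N, S])
    (by
      intro n A hA
      have h1 := step_s11 (𝒢 n) β hβ hsmooth (𝒢.le n) (D n)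
        ((hDm n).mono (𝒢.le _)).aestronglyMeasurable (ρ * 2) (hDb n) (H n).2.2.1 κ (H n).2.2.2
        (S n) (hSm n) (n * (ρ * 2)) (by positivity) (hSb n) A hA
      have e1 : ∀ ω, S (n+1) ω = S n ω + D n ω := fun ω => Finset.sum_range_succ _ _
      simp only [N]
      rw [integral_const_mul, integral_const_mul]
      simp only [e1]
      have h2 : Real.exp (-(n * c)) = Real.exp (-((n+1:ℕ) * c)) * Real.exp c := by
        rw [← Real.exp_add]; push_cast; ring_nf
      rw [h2, mul_assoc]
      refine mul_le_mul_of_nonneg_left (h1.trans ?_) (Real.exp_pos _).le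
      refine mul_le_mul_of_nonneg_right ?_ (integral_nonneg fun ω => (Real.cosh_pos _).le)
      linarith [Real.add_one_le_exp c])
    (1 / δ₁) (by positivity)
  rw [one_div_one_div] at hV
  refine le_trans (measure_mono_ae ?_) hV
  filter_upwards [ae_all_iff.2 (fun n => (H n).2.1)] with ω hbias
  intro hbad
  by_contra hN
  apply hbad
  intro n hn
  have hN' : N n ω < 1 / δ₁ := by
    by_contra h
    exact hN ⟨n, not_lt.1 h⟩
  have hn0 : (0:ℝ) < n := by exact_mod_cast hn
  have hSn : ‖S n ω‖ ≤ n * c + Real.log (2 / δ₁) := by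
    rw [← Real.log_exp (n * c), ← Real.log_mul (Real.exp_pos _).ne' (by positivity),
      Real.le_log_iff_exp_le (by positivity)]
    have h1 : Real.exp ‖S n ω‖ ≤ 2 * Real.cosh ‖S n ω‖ := by
      rw [Real.cosh_eq]; linarith [Real.exp_pos (-‖S n ω‖)]
    have h2 : Real.cosh ‖S n ω‖ = Real.exp (n * c) * N n ω := by
      simp only [N]; rw [← mul_assoc, ← Real.exp_add]; simp
    rw [h2] at h1
    refine h1.trans ?_
    have h3 := mul_le_mul_of_nonneg_left hN'.le (Real.exp_pos (n * c)).le
    calc _ ≤ 2 * (Real.exp (n * c) * (1 / δ₁)) := by linarith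
      _ = _ := by ring
  set b := lam ^ p * (Kp p * 2 ^ (p - 1)) * (v + R ^ p) with hb
  have hsum : ‖∑ k ∈ Finset.range n, (e k ω - lam • (μ - Z ω))‖ ≤ n * b := by
    refine (norm_sum_le _ _).trans ((Finset.sum_le_sum (fun k _ => hbias k)).trans ?_)
    simp
  have hdecomp : (n : ℝ)⁻¹ • (∑ m ∈ Finset.range n,
            (truncB (lam • (X (m + 1) ω - Z ω)) • (X (m + 1) ω - Z ω) + Z ω)) - μ
      = ((n:ℝ)⁻¹ * lam⁻¹) • (ρ⁻¹ • S n ω + ∑ k ∈ Finset.range n, (e k ω - lam • (μ - Z ω))) := by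
    have hS' : ρ⁻¹ • S n ω = ∑ k ∈ Finset.range n, (T k ω - e k ω) := by
      simp only [S, D]
      rw [← Finset.smul_sum, smul_smul, inv_mul_cancel₀ hρ.ne', one_smul]
    have hμ : μ = (n:ℝ)⁻¹ • ∑ k ∈ Finset.range n, μ := by
      rw [Finset.sum_const, Finset.card_range, ← Nat.cast_smul_eq_nsmul ℝ, smul_smul,
        inv_mul_cancel₀ hn0.ne', one_smul]
    conv_lhs =>
      arg 2
      rw [hμ]
    rw [hS', ← Finset.sum_add_distrib, mul_smul, ← smul_sub, ← Finset.sum_sub_distrib,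
      Finset.smul_sum (r := lam⁻¹)]
    congr 1
    refine Finset.sum_congr rfl (fun k _ => ?_)
    simp only [T]
    have : ∀ (t : ℝ) (w a z : B), t • w + z - μ =
        lam⁻¹ • (t • lam • w - a + (a - lam • (μ - z))) := by
      intro t w a z
      rw [sub_add_sub_cancel, smul_sub, smul_comm t lam, inv_smul_smul₀ (ne_of_gt hlam),
        inv_smul_smul₀ (ne_of_gt hlam)]
      abel
    exact this _ _ _ _
  rw [hdecomp, norm_smul, Real.norm_of_nonneg (by positivity)]
  have h1 : ‖ρ⁻¹ • S n ω + ∑ k ∈ Finset.range n, (e k ω - lam • (μ - Z ω))‖ ≤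
      ρ⁻¹ * (n * c + Real.log (2 / δ₁)) + n * b := by
    refine (norm_add_le _ _).trans (add_le_add ?_ hsum)
    rw [norm_smul, Real.norm_of_nonneg (by positivity)]
    gcongr
  refine (mul_le_mul_of_nonneg_left h1 (by positivity)).trans (le_of_eq ?_)
  have hlp : lam ^ p = lam ^ (p - 1) * lam := by
    rw [← Real.rpow_add_one hlam.ne']; ring_nf
  rw [hc, hκ, hb, hlp]
  field_simp
  ring

/-- **Time-uniform line-crossing template (Proposition).** Given a tail bound `r` for a
`𝒢₀`-measurable centering `Ẑ`, for any `ρ, λ > 0` and `δ₁ + δ₂ ≤ 1`, with probability at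
least `1 - δ₁ - δ₂`, simultaneously for all `n ≥ 1`,
`‖μ̂ₙ - μ‖ ≤ λ^{p-1}(ρβ²𝔠_p(ρ) + K_p2^{p-1})(v + r(δ₂)^p) + log(2/δ₁)/(λρn)`. -/
theorem stmt11
    {B : Type*} [NormedAddCommGroup B] [NormedSpace ℝ B] [CompleteSpace B]
    [TopologicalSpace.SeparableSpace B]
    {Ω : Type*} {mΩ : MeasurableSpace Ω} {P : Measure Ω} [IsProbabilityMeasure P]
    (β : ℝ) (hβ : 1 ≤ β)
    (hsmooth : ∀ x y : B, ‖x + y‖ ^ 2 + ‖x - y‖ ^ 2 ≤ 2 * ‖x‖ ^ 2 + 2 * β ^ 2 * ‖y‖ ^ 2)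
    (𝒢 : Filtration ℕ mΩ) (X : ℕ → Ω → B) (μ : B) (p v : ℝ)
    (hp1 : 1 < p) (hp2 : p ≤ 2) (hv : 0 < v)
    (hadapted : ∀ n : ℕ, 1 ≤ n → StronglyMeasurable[𝒢 n] (X n))
    (hint : ∀ n : ℕ, 1 ≤ n → Integrable (X n) P)
    (hmom : ∀ n : ℕ, 1 ≤ n → Integrable (fun ω => ‖X n ω‖ ^ p) P)
    (hcondmean : ∀ n : ℕ, P[X (n + 1) | 𝒢 n] =ᵐ[P] fun _ => μ)
    (hcondmom : ∀ n : ℕ, ∀ᵐ ω ∂P, (P[fun ω' => ‖X (n + 1) ω' - μ‖ ^ p | 𝒢 n]) ω ≤ v)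
    (Z : Ω → B) (hZ : StronglyMeasurable[𝒢 0] Z)
    (r : ℝ → ℝ) (hr_nonneg : ∀ x, 0 ≤ r x)
    (hr : ∀ δ' ∈ Set.Ioc (0 : ℝ) 1, P {ω | r δ' ≤ ‖μ - Z ω‖} ≤ ENNReal.ofReal δ')
    (δ₁ δ₂ : ℝ) (hδ₁ : δ₁ ∈ Set.Ioo (0 : ℝ) 1) (hδ₂ : δ₂ ∈ Set.Ioo (0 : ℝ) 1)
    (hδ : δ₁ + δ₂ ≤ 1)
    (ρ lam : ℝ) (hρ : 0 < ρ) (hlam : 0 < lam) :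
    ENNReal.ofReal (1 - δ₁ - δ₂) ≤
      P {ω | ∀ n : ℕ, 1 ≤ n →
        ‖(n : ℝ)⁻¹ • (∑ m ∈ Finset.range n,
            (truncB (lam • (X (m + 1) ω - Z ω)) • (X (m + 1) ω - Z ω) + Z ω)) - μ‖ ≤
          lam ^ (p - 1) * (ρ * β ^ 2 * frakC p ρ + Kp p * 2 ^ (p - 1)) * (v + r δ₂ ^ p)
            + Real.log (2 / δ₁) / (lam * ρ * n)} := by

  let Z' : Ω → B := fun ω => if ‖μ - Z ω‖ < r δ₂ then Z ω else μ
  have hZ' : StronglyMeasurable[𝒢 0] Z' := by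
    refine StronglyMeasurable.ite ?_ hZ stronglyMeasurable_const
    exact ((stronglyMeasurable_const.sub hZ).norm).measurable measurableSet_Iio
  have hZR : ∀ ω, ‖μ - Z' ω‖ ≤ r δ₂ := by
    intro ω
    simp only [Z']
    split_ifs with h
    · exact h.le
    · simpa using hr_nonneg δ₂
  have hcore := core (P := P) β hβ hsmooth 𝒢 X μ p v hp1 hp2 hadapted hint hmom hcondmean hcondmom
    Z' hZ' (r δ₂) hZR δ₁ hδ₁.1 ρ lam hρ hlam
  have hr2 := hr δ₂ ⟨hδ₂.1, hδ₂.2.le⟩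
  set G := {ω | ∀ n : ℕ, 1 ≤ n →
        ‖(n : ℝ)⁻¹ • (∑ m ∈ Finset.range n,
            (truncB (lam • (X (m + 1) ω - Z ω)) • (X (m + 1) ω - Z ω) + Z ω)) - μ‖ ≤
          lam ^ (p - 1) * (ρ * β ^ 2 * frakC p ρ + Kp p * 2 ^ (p - 1)) * (v + r δ₂ ^ p)
            + Real.log (2 / δ₁) / (lam * ρ * n)} with hG
  set E := {ω | ¬ ∀ n : ℕ, 1 ≤ n →
        ‖(n : ℝ)⁻¹ • (∑ m ∈ Finset.range n,
            (truncB (lam • (X (m + 1) ω - Z' ω)) • (X (m + 1) ω - Z' ω) + Z' ω)) - μ‖ ≤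
          lam ^ (p - 1) * (ρ * β ^ 2 * frakC p ρ + Kp p * 2 ^ (p - 1)) * (v + r δ₂ ^ p)
            + Real.log (2 / δ₁) / (lam * ρ * n)} with hE
  have hcover : (Set.univ : Set Ω) ⊆ G ∪ (E ∪ {ω | r δ₂ ≤ ‖μ - Z ω‖}) := by
    intro ω _
    by_cases h1 : r δ₂ ≤ ‖μ - Z ω‖
    · exact Or.inr (Or.inr h1)
    by_cases h2 : ω ∈ E
    · exact Or.inr (Or.inl h2)
    left
    have hz : Z' ω = Z ω := if_pos (not_le.1 h1)
    have h3 := not_not.1 h2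
    rw [hz] at h3
    exact h3
  have h1 : (1 : ENNReal) ≤ P G + (ENNReal.ofReal δ₁ + ENNReal.ofReal δ₂) := by
    rw [← measure_univ (μ := P)]
    refine (measure_mono hcover).trans ((measure_union_le _ _).trans ?_)
    gcongr
    exact (measure_union_le _ _).trans (add_le_add hcore hr2)
  rw [← ENNReal.ofReal_add hδ₁.1.le hδ₂.1.le] at h1
  rw [sub_sub, ENNReal.ofReal_sub _ (by linarith [hδ₁.1, hδ₂.1]), ENNReal.ofReal_one]
  exact tsub_le_iff_right.2 h1
end
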